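/- Assume Σ_{j∈ℤ} r(j)² < ∞ and that r is asymptotically of constant sign and monotone: there is K ∈ ℕ such that either r(k) ≥ 0 and r(k+1) ≤ r(k) for all k ≥ K, or r(k) ≤ 0 and r(k+1) ≥ r(k) for all k ≥ K. Then d_TV( U_{f_q,n}(Z), N(0, u_{f_q}(Z)) ) → 0 as n → ∞. -/

import Mathlib

open MeasureTheory ProbabilityTheory Filter
open scoped NNReal ENNReal

noncomputable section

variable {Ω : Type*} [MeasureSpace Ω]

/-- `Z` is a centered stationary Gaussian sequence with covariance `r`. -/
def IsCSG (Z : ℤ → Ω → ℝ) (r : ℤ → ℝ) : Prop :=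
  (∀ k, Measurable (Z k)) ∧
  (∀ (s : Finset ℤ) (a : ℤ → ℝ), ∃ v : ℝ≥0,
    Measure.map (fun ω => ∑ k ∈ s, a k * Z k ω) (ℙ : Measure Ω) = gaussianReal 0 v) ∧
  (∀ j k : ℤ, ∫ ω, Z j ω * Z k ω = r (k - j)) ∧
  0 < r 0

/-- `m`-th probabilists' Hermite polynomial, as a function on `ℝ`. -/
def hermiteFun (m : ℕ) (x : ℝ) : ℝ := Polynomial.aeval x (Polynomial.hermite m)

/-- The polynomial `f_q(x) = ∑_{k=0}^{q/2} d_{2k} He_{2k}(x/√r0)`. -/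
def fpoly (r0 : ℝ) (d : ℕ → ℝ) (q : ℕ) (x : ℝ) : ℝ :=
  ∑ k ∈ Finset.range (q / 2 + 1), d (2 * k) * hermiteFun (2 * k) (x / Real.sqrt r0)

/-- Polynomial variation `Q_{f,n}(X)`. -/
def Qvar (f : ℝ → ℝ) (X : ℤ → Ω → ℝ) (n : ℕ) (ω : Ω) : ℝ :=
  (1 / (n : ℝ)) * ∑ i ∈ Finset.range n, f (X (i : ℤ) ω)

/-- `λ_f(X) = E[f(X_0)]`. -/
def lamE (f : ℝ → ℝ) (X : ℤ → Ω → ℝ) : ℝ := ∫ ω, f (X 0 ω)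

/-- `U_{f,n}(X) = √n (Q_{f,n}(X) − λ_f(X))`. -/
def Ustat (f : ℝ → ℝ) (X : ℤ → Ω → ℝ) (n : ℕ) (ω : Ω) : ℝ :=
  Real.sqrt n * (Qvar f X n ω - lamE f X)

/-- Variance of `U_{f,n}(X)`. -/
def varU (f : ℝ → ℝ) (X : ℤ → Ω → ℝ) (n : ℕ) : ℝ := ∫ ω, (Ustat f X n ω) ^ 2

/-- Standardized statistic `F_{f,n}(X)`. -/
def Fstat (f : ℝ → ℝ) (X : ℤ → Ω → ℝ) (n : ℕ) (ω : Ω) : ℝ :=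
  Ustat f X n ω / Real.sqrt (varU f X n)

/-- fourth cumulant `κ₄(X) = E[X⁴] − 3 (E[X²])²` of a centered random variable. -/
def kappa4 (X : Ω → ℝ) : ℝ := (∫ ω, X ω ^ 4) - 3 * (∫ ω, X ω ^ 2) ^ 2

/-- third cumulant `κ₃(X) = E[X³]`. -/
def kappa3 (X : Ω → ℝ) : ℝ := ∫ ω, X ω ^ 3

/-- `u_{f_q}(Z) = ∑_{k=1}^{q/2} d_{2k}² (2k)! ∑_{j∈ℤ} (r(j)/r(0))^{2k}`. -/
def ufq (r : ℤ → ℝ) (d : ℕ → ℝ) (q : ℕ) : ℝ :=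
  ∑ k ∈ Finset.Icc 1 (q / 2),
    (d (2 * k)) ^ 2 * (Nat.factorial (2 * k)) * ∑' j : ℤ, (r j / r 0) ^ (2 * k)

/-- Total variation distance between two laws on `ℝ`. -/
def dTV (μ ν : Measure ℝ) : ℝ :=
  ⨆ A : {A : Set ℝ // MeasurableSet A}, |(μ A.1).toReal - (ν A.1).toReal|

/-- Wasserstein distance between two laws on `ℝ`. -/
def dW (μ ν : Measure ℝ) : ℝ :=
  ⨆ f : {f : ℝ → ℝ // LipschitzWith 1 f}, |(∫ x, f.1 x ∂μ) - ∫ x, f.1 x ∂ν|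

/-- The quadratic function `f₂(x) = x²`. -/
def f2 : ℝ → ℝ := fun x => x ^ 2

/-- `U_{f₂,n}(X) = √n (Q_{f₂,n}(X) − r(0))`, quadratic case. -/
def U2 (X : ℤ → Ω → ℝ) (r0 : ℝ) (n : ℕ) (ω : Ω) : ℝ :=
  Real.sqrt n * (Qvar f2 X n ω - r0)

/-- Variance of `U_{f₂,n}`. -/
def varU2 (X : ℤ → Ω → ℝ) (r0 : ℝ) (n : ℕ) : ℝ := ∫ ω, (U2 X r0 n ω) ^ 2

/-- Standardized quadratic statistic `F_{f₂,n}`. -/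
def F2stat (X : ℤ → Ω → ℝ) (r0 : ℝ) (n : ℕ) (ω : Ω) : ℝ :=
  U2 X r0 n ω / Real.sqrt (varU2 X r0 n)

/-- `p`-th order finite difference of a sequence of processes. -/
def fdiff : ℕ → (ℤ → Ω → ℝ) → (ℤ → Ω → ℝ)
  | 0, Z => Z
  | (p + 1), Z => fun k ω => fdiff p Z (k + 1) ω - fdiff p Z k ω

theorem hasDerivAt_gaussianPDFReal_zero (v : ℝ≥0) (x : ℝ) :
    HasDerivAt (gaussianPDFReal 0 v) (-(x / v) * gaussianPDFReal 0 v x) x := by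
  have h1 : HasDerivAt (fun x : ℝ => -(x - 0) ^ 2 / (2 * v)) (-(x / v)) x := by
    have h := (((hasDerivAt_id' x).sub_const 0).pow 2).neg.div_const (2 * (v : ℝ))
    refine h.congr_deriv ?_
    by_cases hv : (v : ℝ) = 0
    · simp [hv]
    · simp; field_simp
  have h2 := (h1.exp).const_mul (Real.sqrt (2 * Real.pi * v))⁻¹
  rw [gaussianPDFReal_def]
  refine h2.congr_deriv ?_
  ring

theorem integrable_gaussianReal_iff {v : ℝ≥0} (hv : v ≠ 0) (f : ℝ → ℝ) :
    Integrable f (gaussianReal 0 v) ↔ Integrable (fun x => gaussianPDFReal 0 v x * f x) := by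
  rw [gaussianReal_of_var_ne_zero 0 hv,
    integrable_withDensity_iff_integrable_smul' (measurable_gaussianPDF 0 v)
      (Eventually.of_forall fun x => gaussianPDF_lt_top)]
  simp [toReal_gaussianPDF]

/-- Gaussian integration by parts on the real line. -/
theorem integral_id_mul_gaussianReal {ψ ψ' : ℝ → ℝ} (hd : ∀ x, HasDerivAt ψ (ψ' x) x)
    (h0 : Integrable ψ (gaussianReal 0 1)) (h1 : Integrable (fun x => x * ψ x) (gaussianReal 0 1))
    (h2 : Integrable ψ' (gaussianReal 0 1)) :
    ∫ x, x * ψ x ∂gaussianReal 0 1 = ∫ x, ψ' x ∂gaussianReal 0 1 := by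
  have hv : (1 : ℝ≥0) ≠ 0 := one_ne_zero
  rw [integral_gaussianReal_eq_integral_smul hv, integral_gaussianReal_eq_integral_smul hv]
  rw [integrable_gaussianReal_iff hv] at h0 h1 h2
  have key := integral_eq_zero_of_hasDerivAt_of_integrable
    (f := fun x => gaussianPDFReal 0 1 x * ψ x)
    (f' := fun x => gaussianPDFReal 0 1 x * ψ' x - gaussianPDFReal 0 1 x * (x * ψ x))
    (fun x => by
      refine ((hasDerivAt_gaussianPDFReal_zero 1 x).mul (hd x)).congr_deriv ?_
      simp; ring) (h2.sub h1) h0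
  rw [integral_sub h2 h1] at key
  simp only [smul_eq_mul]
  linarith

namespace IsCSG

variable {Z : ℤ → Ω → ℝ} {r : ℤ → ℝ}

theorem isGaussianProcess (hZ : IsCSG Z r) : IsGaussianProcess Z (ℙ : Measure Ω) where
  hasGaussianLaw I := by
    have hm : Measurable (fun ω => I.restrict (Z · ω)) := by
      refine measurable_pi_lambda _ fun k => hZ.1 k
    refine ⟨isGaussian_of_map_eq_gaussianReal fun L => ?_⟩
    obtain ⟨v, hv⟩ := hZ.2.1 I
      (fun k => if h : k ∈ I then L (Pi.single (⟨k, h⟩ : I) 1) else 0)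
    refine ⟨0, v, ?_⟩
    rw [Measure.map_map (by fun_prop) hm, ← hv]
    congr 1
    ext ω
    simp only [Function.comp_apply]
    rw [← Finset.sum_coe_sort I]
    have : (I.restrict (Z · ω)) = ∑ k : I, (Z k ω) • (Pi.single k (1 : ℝ) : I → ℝ) := by
      ext j
      simp [Finset.sum_apply, Pi.single_apply]
    rw [this, map_sum]
    refine Finset.sum_congr rfl fun k _ => ?_
    simp [mul_comm]

theorem exists_map_eq (hZ : IsCSG Z r) (k : ℤ) :
    ∃ v : ℝ≥0, Measure.map (Z k) (ℙ : Measure Ω) = gaussianReal 0 v := by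
  simpa using hZ.2.1 {k} (fun _ => 1)

theorem memLp (hZ : IsCSG Z r) (k : ℤ) (p : ℝ≥0) : MemLp (Z k) p (ℙ : Measure Ω) := by
  obtain ⟨v, hv⟩ := hZ.exists_map_eq k
  have h := memLp_id_gaussianReal (μ := 0) (v := v) p
  rw [← hv, memLp_map_measure_iff (by fun_prop) (hZ.1 k).aemeasurable] at h
  exact h

theorem integral_eq_zero (hZ : IsCSG Z r) (k : ℤ) : ∫ ω, Z k ω = 0 := by
  obtain ⟨v, hv⟩ := hZ.exists_map_eq k
  have h := integral_id_gaussianReal (μ := 0) (v := v)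
  rw [← hv, integral_map (hZ.1 k).aemeasurable (by fun_prop)] at h
  exact h

theorem map_eq (hZ : IsCSG Z r) (k : ℤ) :
    Measure.map (Z k) (ℙ : Measure Ω) = gaussianReal 0 (r 0).toNNReal := by
  obtain ⟨v, hv⟩ := hZ.exists_map_eq k
  have h := variance_fun_id_gaussianReal (μ := 0) (v := v)
  rw [variance_of_integral_eq_zero (by fun_prop) integral_id_gaussianReal, ← hv,
    integral_map (hZ.1 k).aemeasurable (by fun_prop)] at h
  have h2 := hZ.2.2.1 k k
  simp only [← pow_two, sub_self] at h2
  rw [hv, ← h2, h]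
  simp

theorem symm (hZ : IsCSG Z r) (k : ℤ) : r (-k) = r k := by
  have h1 := hZ.2.2.1 0 k
  have h2 := hZ.2.2.1 k 0
  simp only [mul_comm (Z k _), sub_zero, zero_sub] at h1 h2
  rw [← h1, ← h2]

variable [IsProbabilityMeasure (ℙ : Measure Ω)]

theorem indepFun_residual (hZ : IsCSG Z r) (h0 : r 0 = 1) (i : ℤ) :
    IndepFun (fun ω (_ : Unit) => Z i ω) (fun ω j => Z j ω - r (j - i) * Z i ω) ℙ := by
  have hg := hZ.isGaussianProcess
  refine IsGaussianProcess.indepFun_of_covariance_eq_zero (X := fun _ : Unit => Z i)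
    (Y := fun j ω => Z j ω - r (j - i) * Z i ω) ?_ (fun _ => (hZ.1 i).aemeasurable)
    (fun j => ((hZ.1 j).sub ((hZ.1 i).const_mul _)).aemeasurable) ?_
  · refine hg.of_isGaussianProcess fun s => ?_
    rcases s with s | j
    · exact ⟨{i}, ContinuousLinearMap.proj ⟨i, by simp⟩, fun ω => by simp⟩
    · refine ⟨{i, j}, ContinuousLinearMap.proj ⟨j, by simp⟩ -
        r (j - i) • ContinuousLinearMap.proj ⟨i, by simp⟩, fun ω => by simp⟩
  · intro _ j
    have m2 : ∀ k, MemLp (Z k) 2 (ℙ : Measure Ω) := fun k => by simpa using hZ.memLp k 2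
    rw [covariance_fun_sub_right (m2 i) (m2 j) ((m2 i).const_mul _), covariance_const_mul_right,
      covariance_eq_sub (m2 i) (m2 j), covariance_eq_sub (m2 i) (m2 i)]
    simp [hZ.integral_eq_zero, hZ.2.2.1, h0]

/-- Gaussian integration by parts for a stationary sequence with unit variance. -/
theorem integral_mul_eq (hZ : IsCSG Z r) (h0 : r 0 = 1) (i : ℤ) {Φ Φ' : (ℤ → ℝ) → ℝ}
    (hΦ : Measurable Φ) (hΦ' : Measurable Φ')
    (hd : ∀ (w : ℤ → ℝ) (t : ℝ), HasDerivAt (fun t : ℝ => Φ (fun j => w j + r (j - i) * t))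
      (Φ' (fun j => w j + r (j - i) * t)) t)
    (i0 : Integrable (fun ω => Φ (Z · ω)) ℙ) (i1 : Integrable (fun ω => Z i ω * Φ (Z · ω)) ℙ)
    (i2 : Integrable (fun ω => Φ' (Z · ω)) ℙ) :
    ∫ ω, Z i ω * Φ (Z · ω) = ∫ ω, Φ' (Z · ω) := by
  set W : Ω → ℤ → ℝ := fun ω j => Z j ω - r (j - i) * Z i ω with hW
  have mW : Measurable W :=
    measurable_pi_lambda _ fun j => (hZ.1 j).sub ((hZ.1 i).const_mul _)
  have hind : IndepFun W (Z i) ℙ :=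
    ((hZ.indepFun_residual h0 i).comp (φ := fun f : Unit → ℝ => f ()) (by fun_prop)
      measurable_id).symm
  have hlaw : Measure.map (Z i) (ℙ : Measure Ω) = gaussianReal 0 1 := by
    rw [hZ.map_eq, h0]; simp
  have hmap : Measure.map (fun ω => (W ω, Z i ω)) (ℙ : Measure Ω) =
      (Measure.map W ℙ).prod (gaussianReal 0 1) := by
    rw [← hlaw]
    exact (indepFun_iff_map_prod_eq_prod_map_map mW.aemeasurable (hZ.1 i).aemeasurable).1 hind
  have mp : Measurable (fun ω => (W ω, Z i ω)) := mW.prodMk (hZ.1 i)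
  let S : (ℤ → ℝ) × ℝ → ℤ → ℝ := fun p j => p.1 j + r (j - i) * p.2
  have mS : Measurable S := measurable_pi_lambda _ fun j => by fun_prop
  have hS : ∀ ω, S (W ω, Z i ω) = (Z · ω) := fun ω => by ext j; simp [S, hW]
  have tr : ∀ F : (ℤ → ℝ) × ℝ → ℝ, Measurable F →
      ∫ ω, F (W ω, Z i ω) = ∫ p, F p ∂(Measure.map W ℙ).prod (gaussianReal 0 1) := by
    intro F hF
    rw [← hmap, integral_map mp.aemeasurable hF.aestronglyMeasurable]
  have tri : ∀ F : (ℤ → ℝ) × ℝ → ℝ, Measurable F → Integrable (fun ω => F (W ω, Z i ω)) ℙ →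
      Integrable F ((Measure.map W ℙ).prod (gaussianReal 0 1)) := by
    intro F hF h
    rwa [← hmap, integrable_map_measure hF.aestronglyMeasurable mp.aemeasurable]
  have : IsProbabilityMeasure (Measure.map W (ℙ : Measure Ω)) :=
    Measure.isProbabilityMeasure_map mW.aemeasurable
  have m0 : Measurable fun p => Φ (S p) := hΦ.comp mS
  have m1 : Measurable fun p : (ℤ → ℝ) × ℝ => p.2 * Φ (S p) := measurable_snd.mul m0
  have m2 : Measurable fun p => Φ' (S p) := hΦ'.comp mS
  have j0 := tri _ m0 (by simpa [hS] using i0)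
  have j1 := tri _ m1 (by simpa [hS] using i1)
  have j2 := tri _ m2 (by simpa [hS] using i2)
  have e1 := tr _ m1
  have e2 := tr _ m2
  simp only [hS] at e1 e2
  rw [e1, e2, integral_prod _ j1, integral_prod _ j2]
  refine integral_congr_ae ?_
  filter_upwards [j0.prod_right_ae, j1.prod_right_ae, j2.prod_right_ae] with w a0 a1 a2
  exact integral_id_mul_gaussianReal (hd w) a0 a1 a2

end IsCSG

theorem measureReal_le_of_forall_continuous {μ ν : Measure ℝ} [IsProbabilityMeasure μ]
    [IsProbabilityMeasure ν] {ε : ℝ}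
    (h : ∀ f : ℝ → ℝ, Continuous f → (∀ x, 0 ≤ f x) → (∀ x, f x ≤ 1) →
      |∫ x, f x ∂μ - ∫ x, f x ∂ν| ≤ ε) {A : Set ℝ} (hA : MeasurableSet A) :
    μ.real A ≤ ν.real A + ε := by
  have hclosed : ∀ F : Set ℝ, IsClosed F → μ.real F ≤ ν.real F + ε := by
    intro F hF
    have hpos : ∀ n : ℕ, (0 : ℝ) < 1 / ((n : ℝ) + 1) := fun n => by positivity
    have t1 := tendsto_integral_thickenedIndicator_of_isClosed μ hF hpos
      tendsto_one_div_add_atTop_nhds_zero_nat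
    have t2 := tendsto_integral_thickenedIndicator_of_isClosed ν hF hpos
      tendsto_one_div_add_atTop_nhds_zero_nat
    refine le_of_tendsto_of_tendsto' t1 (t2.add_const ε) fun n => ?_
    have := h (fun x => (thickenedIndicator (hpos n) F x : ℝ))
      (NNReal.continuous_coe.comp (thickenedIndicator (hpos n) F).continuous)
      (fun x => NNReal.coe_nonneg _)
      (fun x => by exact_mod_cast thickenedIndicator_le_one (hpos n) F x)
    linarith [(abs_le.1 this).2]
  refine le_of_forall_pos_le_add fun δ hδ => ?_
  obtain ⟨F, hFA, hF, hlt⟩ := hA.exists_isClosed_lt_add (measure_ne_top μ A)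
    (ε := ENNReal.ofReal δ) (by simpa using hδ)
  have h1 : μ.real A ≤ μ.real F + δ := by
    have := ENNReal.toReal_mono (by simp) hlt.le
    rw [ENNReal.toReal_add (by simp) (by simp), ENNReal.toReal_ofReal hδ.le] at this
    exact this
  have h2 : ν.real F ≤ ν.real A := measureReal_mono hFA
  linarith [hclosed F hF]

theorem dTV_nonneg (μ ν : Measure ℝ) : 0 ≤ dTV μ ν :=
  Real.iSup_nonneg fun _ => abs_nonneg _

theorem dTV_le_of_forall_continuous {μ ν : Measure ℝ} [IsProbabilityMeasure μ]
    [IsProbabilityMeasure ν] {ε : ℝ}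
    (h : ∀ f : ℝ → ℝ, Continuous f → (∀ x, 0 ≤ f x) → (∀ x, f x ≤ 1) →
      |∫ x, f x ∂μ - ∫ x, f x ∂ν| ≤ ε) : dTV μ ν ≤ ε := by
  have : Nonempty {A : Set ℝ // MeasurableSet A} := ⟨⟨∅, .empty⟩⟩
  refine ciSup_le fun A => abs_le.2 ⟨?_, ?_⟩
  · have := measureReal_le_of_forall_continuous (μ := ν) (ν := μ)
      (fun f hf h0 h1 => by rw [abs_sub_comm]; exact h f hf h0 h1) A.2
    simp only [Measure.real] at this
    linarith
  · have := measureReal_le_of_forall_continuous h A.2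
    simp only [Measure.real] at this
    linarith

section SteinEquation

variable {v : ℝ≥0}

theorem integrable_id_mul_gaussianPDFReal (hv : v ≠ 0) :
    Integrable (fun y => y * gaussianPDFReal 0 v y) := by
  have h := (memLp_id_gaussianReal (μ := 0) (v := v) 1).integrable (by simp)
  rw [integrable_gaussianReal_iff hv] at h
  simpa [mul_comm] using h

theorem hasDerivAt_neg_var_mul_gaussianPDFReal (hv : v ≠ 0) (x : ℝ) :
    HasDerivAt (fun x => -(v : ℝ) * gaussianPDFReal 0 v x) (x * gaussianPDFReal 0 v x) x := by
  refine ((hasDerivAt_gaussianPDFReal_zero v x).const_mul (-(v : ℝ))).congr_deriv ?_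
  have : (v : ℝ) ≠ 0 := by exact_mod_cast hv
  field_simp

theorem integral_Ioi_id_mul_gaussianPDFReal (hv : v ≠ 0) (x : ℝ) :
    ∫ y in Set.Ioi x, y * gaussianPDFReal 0 v y = v * gaussianPDFReal 0 v x := by
  have hi := (integrable_gaussianPDFReal 0 v).const_mul (-(v : ℝ))
  rw [integral_Ioi_of_hasDerivAt_of_tendsto'
    (fun y _ => hasDerivAt_neg_var_mul_gaussianPDFReal hv y)
    (integrable_id_mul_gaussianPDFReal hv).integrableOn
    (tendsto_zero_of_hasDerivAt_of_integrableOn_Ioi (a := x)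
      (fun y _ => hasDerivAt_neg_var_mul_gaussianPDFReal hv y)
      (integrable_id_mul_gaussianPDFReal hv).integrableOn hi.integrableOn)]
  ring

theorem integral_Iic_id_mul_gaussianPDFReal (hv : v ≠ 0) (x : ℝ) :
    ∫ y in Set.Iic x, y * gaussianPDFReal 0 v y = -(v * gaussianPDFReal 0 v x) := by
  have hi := (integrable_gaussianPDFReal 0 v).const_mul (-(v : ℝ))
  rw [integral_Iic_of_hasDerivAt_of_tendsto'
    (fun y _ => hasDerivAt_neg_var_mul_gaussianPDFReal hv y)
    (integrable_id_mul_gaussianPDFReal hv).integrableOn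
    (tendsto_zero_of_hasDerivAt_of_integrableOn_Iic (a := x)
      (fun y _ => hasDerivAt_neg_var_mul_gaussianPDFReal hv y)
      (integrable_id_mul_gaussianPDFReal hv).integrableOn hi.integrableOn)]
  ring

theorem abs_mul_integral_Iic_le (hv : v ≠ 0) {g : ℝ → ℝ} (hg : Integrable g)
    (hg0 : ∫ y, g y = 0) (hgb : ∀ y, |g y| ≤ gaussianPDFReal 0 v y) (x : ℝ) :
    |x * ∫ y in Set.Iic x, g y| ≤ v * gaussianPDFReal 0 v x := by
  have hp := fun y => gaussianPDFReal_nonneg 0 v y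
  have hint := integrable_id_mul_gaussianPDFReal hv
  rcases le_total 0 x with hx | hx
  · have hsplit := intervalIntegral.integral_Iic_add_Ioi (b := x) hg.integrableOn hg.integrableOn
    rw [hg0] at hsplit
    rw [eq_neg_of_add_eq_zero_left hsplit, mul_neg, abs_neg, ← integral_const_mul,
      ← integral_Ioi_id_mul_gaussianPDFReal hv x, ← Real.norm_eq_abs]
    refine norm_integral_le_of_norm_le hint.integrableOn ?_
    filter_upwards [ae_restrict_mem measurableSet_Ioi] with y hy
    rw [Real.norm_eq_abs, abs_mul, abs_of_nonneg hx]
    exact mul_le_mul (le_of_lt hy) (hgb y) (abs_nonneg _) (hx.trans (le_of_lt hy))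
  · rw [← integral_const_mul, ← neg_neg ((v : ℝ) * _), ← integral_Iic_id_mul_gaussianPDFReal hv x,
      ← Real.norm_eq_abs, ← integral_neg]
    refine norm_integral_le_of_norm_le hint.neg.integrableOn ?_
    filter_upwards [ae_restrict_mem measurableSet_Iic] with y hy
    rw [Real.norm_eq_abs, abs_mul, abs_of_nonpos hx, ← neg_mul]
    have hy' : y ≤ x := hy
    exact mul_le_mul (by linarith) (hgb y) (abs_nonneg _) (by linarith)

/-- A bounded solution of Stein's equation for a continuous test function with values in
`[0, 1]`. -/
theorem exists_stein_solution (hv : v ≠ 0) {f : ℝ → ℝ} (hf : Continuous f) (h0 : ∀ x, 0 ≤ f x)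
    (h1 : ∀ x, f x ≤ 1) :
    ∃ φ φ' : ℝ → ℝ, (∀ x, HasDerivAt φ (φ' x) x) ∧ Continuous φ' ∧
      (∀ x, v * φ' x - x * φ x = f x - ∫ y, f y ∂gaussianReal 0 v) ∧
      (∀ x, |v * φ' x| ≤ 2) ∧ ∃ C, ∀ x, |φ x| ≤ C := by
  have hvr : (v : ℝ) ≠ 0 := by exact_mod_cast hv
  have hvp : (0 : ℝ) < v := lt_of_le_of_ne v.2 hvr.symm
  have hp := fun x => gaussianPDFReal_pos 0 v x hv
  set c := ∫ y, f y ∂gaussianReal 0 v with hc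
  have hcf : ∀ x, |f x - c| ≤ 1 := by
    have hfi : Integrable f (gaussianReal 0 v) :=
      Integrable.of_bound hf.aestronglyMeasurable 1
        (Eventually.of_forall fun x => abs_le.2 ⟨by linarith [h0 x], h1 x⟩)
    have c0 : 0 ≤ c := integral_nonneg h0
    have c1 : c ≤ 1 := by
      have := integral_mono hfi (integrable_const 1) h1
      simpa using this
    intro x
    exact abs_le.2 ⟨by linarith [h0 x], by linarith [h1 x]⟩
  have hpc : Continuous (gaussianPDFReal 0 v) :=
    continuous_iff_continuousAt.2 fun x => (hasDerivAt_gaussianPDFReal_zero v x).continuousAt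
  set g : ℝ → ℝ := fun y => gaussianPDFReal 0 v y * (f y - c) with hgdef
  have hgc : Continuous g := by fun_prop
  have hgb : ∀ y, |g y| ≤ gaussianPDFReal 0 v y := fun y => by
    rw [hgdef, abs_mul, abs_of_pos (hp y)]
    exact mul_le_of_le_one_right (hp y).le (hcf y)
  have hgi : Integrable g := (integrable_gaussianPDFReal 0 v).mono' hgc.aestronglyMeasurable
    (Eventually.of_forall hgb)
  have hg0 : ∫ y, g y = 0 := by
    have e := integral_gaussianReal_eq_integral_smul (μ := 0) hv (f := fun y => f y - c)
    have hfi : Integrable f (gaussianReal 0 v) :=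
      Integrable.of_bound hf.aestronglyMeasurable 1
        (Eventually.of_forall fun x => abs_le.2 ⟨by linarith [h0 x], h1 x⟩)
    rw [integral_sub hfi (integrable_const c)] at e
    simp only [smul_eq_mul] at e
    rw [hgdef, ← e]
    simp [hc]
  set G : ℝ → ℝ := fun x => ∫ y in Set.Iic x, g y with hG
  have hGd : ∀ x, HasDerivAt G (g x) x := by
    intro x
    have h := (intervalIntegral.integral_hasDerivAt_right (hgc.intervalIntegrable 0 x)
      (hgc.stronglyMeasurableAtFilter _ _) hgc.continuousAt).const_add (G 0)
    refine h.congr_of_eventuallyEq (Eventually.of_forall fun y => ?_)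
    simp only [hG, ← intervalIntegral.integral_Iic_sub_Iic (hgi.integrableOn (s := Set.Iic 0))
      (hgi.integrableOn (s := Set.Iic y))]
    ring
  set φ : ℝ → ℝ := fun x => G x / (v * gaussianPDFReal 0 v x) with hφ
  have hφd : ∀ x, HasDerivAt φ ((x * φ x + (f x - c)) / v) x := by
    intro x
    have hne := (hp x).ne'
    refine ((hGd x).div ((hasDerivAt_gaussianPDFReal_zero v x).const_mul (v : ℝ))
      (mul_ne_zero hvr hne)).congr_deriv ?_
    simp only [hφ, hgdef]
    field_simp
    ring
  have hφc : Continuous φ := continuous_iff_continuousAt.2 fun x => (hφd x).continuousAt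
  have hxφ : ∀ x, |x * φ x| ≤ 1 := by
    intro x
    have := abs_mul_integral_Iic_le hv hgi hg0 hgb x
    have hpos : 0 < v * gaussianPDFReal 0 v x := mul_pos hvp (hp x)
    rw [hφ, ← mul_div_assoc, abs_div, abs_of_pos hpos, div_le_one hpos]
    exact this
  refine ⟨φ, fun x => (x * φ x + (f x - c)) / v, hφd, by fun_prop, fun x => ?_, fun x => ?_, ?_⟩
  · field_simp
    ring
  · rw [mul_div_cancel₀ _ hvr]
    exact (abs_add_le _ _).trans (by linarith [hxφ x, hcf x])
  · obtain ⟨C, hC⟩ := (isCompact_Icc (a := (-1 : ℝ)) (b := 1)).exists_bound_of_continuousOn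
      hφc.continuousOn
    refine ⟨max C 1, fun x => ?_⟩
    by_cases hx : |x| ≤ 1
    · exact (hC x (abs_le.1 hx)).trans (le_max_left _ _)
    · refine le_trans ?_ (le_max_right _ _)
      have h := hxφ x
      rw [abs_mul] at h
      nlinarith [abs_nonneg (φ x)]

end SteinEquation

/-- All absolute moments of `X` are finite. -/
def HasMoments (X : Ω → ℝ) : Prop := ∀ p : ℝ≥0, MemLp X p (ℙ : Measure Ω)

namespace HasMoments

variable {X Y : Ω → ℝ}

theorem integrable (hX : HasMoments X) : Integrable X (ℙ : Measure Ω) :=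
  memLp_one_iff_integrable.1 (by simpa using hX 1)

theorem add (hX : HasMoments X) (hY : HasMoments Y) : HasMoments fun ω => X ω + Y ω :=
  fun p => (hX p).add (hY p)

theorem mul (hX : HasMoments X) (hY : HasMoments Y) : HasMoments fun ω => X ω * Y ω := by
  intro p
  have : ENNReal.HolderTriple ((2 * p : ℝ≥0) : ℝ≥0∞) ((2 * p : ℝ≥0) : ℝ≥0∞) (p : ℝ≥0∞) := by
    constructor
    rw [ENNReal.coe_mul, ENNReal.mul_inv (by simp) (by simp), ← add_mul]
    simp [ENNReal.inv_two_add_inv_two]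
  exact (hY (2 * p)).mul (hX (2 * p))

theorem sum {ι : Type*} (s : Finset ι) {X : ι → Ω → ℝ} (h : ∀ i ∈ s, HasMoments (X i)) :
    HasMoments fun ω => ∑ i ∈ s, X i ω :=
  fun p => memLp_finsetSum s fun i hi => h i hi p

variable [IsProbabilityMeasure (ℙ : Measure Ω)]

theorem of_bounded (hX : Measurable X) (C : ℝ) (h : ∀ ω, |X ω| ≤ C) : HasMoments X :=
  fun _ => MemLp.of_bound hX.aestronglyMeasurable C (Eventually.of_forall h)

theorem const (c : ℝ) : HasMoments fun _ : Ω => c := fun _ => memLp_const c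

theorem const_mul (c : ℝ) (hX : HasMoments X) : HasMoments fun ω => c * X ω := (const c).mul hX

theorem pow (hX : HasMoments X) (n : ℕ) : HasMoments fun ω => X ω ^ n := by
  induction n with
  | zero => simpa using const 1
  | succ n ih => simpa [pow_succ] using ih.mul hX

theorem polynomial_eval (hX : HasMoments X) (P : Polynomial ℝ) :
    HasMoments fun ω => P.eval (X ω) := by
  simp only [Polynomial.eval_eq_sum_range]
  exact sum _ fun k _ => const_mul _ (hX.pow k)

end HasMoments

theorem integral_add_four {f₁ f₂ f₃ f₄ : Ω → ℝ} (h₁ : Integrable f₁ (ℙ : Measure Ω))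
    (h₂ : Integrable f₂ (ℙ : Measure Ω)) (h₃ : Integrable f₃ (ℙ : Measure Ω))
    (h₄ : Integrable f₄ (ℙ : Measure Ω)) :
    ∫ ω, (f₁ ω + f₂ ω + f₃ ω + f₄ ω) = (∫ ω, f₁ ω) + (∫ ω, f₂ ω) + (∫ ω, f₃ ω) + ∫ ω, f₄ ω := by
  have e := integral_add ((h₁.add h₂).add h₃) h₄
  simp only [Pi.add_apply] at e
  have e' := integral_add (h₁.add h₂) h₃
  simp only [Pi.add_apply] at e'
  rw [e, e', integral_add h₁ h₂]

/-- Total absolute covariance between the pairs `(i, j)` and `(k, l)`. -/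
def crossCov (r : ℤ → ℝ) (i j k l : ℤ) : ℝ :=
  |r (k - i)| + |r (l - i)| + |r (k - j)| + |r (l - j)|

theorem crossCov_nonneg (r : ℤ → ℝ) (i j k l : ℤ) : 0 ≤ crossCov r i j k l := by
  unfold crossCov; positivity

/-- `X i j k l` is bounded by a constant multiple of the `m`-th power of `crossCov`. -/
def CrossBdd (r : ℤ → ℝ) (m : ℕ) (X : ℤ → ℤ → ℤ → ℤ → ℝ) : Prop :=
  ∃ C, 0 ≤ C ∧ ∀ i j k l, |X i j k l| ≤ C * crossCov r i j k l ^ m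

namespace CrossBdd

variable {r : ℤ → ℝ} {m : ℕ} {X Y : ℤ → ℤ → ℤ → ℤ → ℝ}

theorem add (hX : CrossBdd r m X) (hY : CrossBdd r m Y) :
    CrossBdd r m fun i j k l => X i j k l + Y i j k l := by
  obtain ⟨C, hC0, hC⟩ := hX
  obtain ⟨D, hD0, hD⟩ := hY
  refine ⟨C + D, by positivity, fun i j k l => (abs_add_le _ _).trans ?_⟩
  rw [add_mul]
  exact add_le_add (hC i j k l) (hD i j k l)

theorem bounded_mul {c : ℤ → ℤ → ℤ → ℤ → ℝ} {K : ℝ} (hc : ∀ i j k l, |c i j k l| ≤ K)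
    (hX : CrossBdd r m X) : CrossBdd r m fun i j k l => c i j k l * X i j k l := by
  obtain ⟨C, hC0, hC⟩ := hX
  have hK : 0 ≤ K := (abs_nonneg _).trans (hc 0 0 0 0)
  refine ⟨K * C, by positivity, fun i j k l => ?_⟩
  rw [abs_mul, mul_assoc]
  exact mul_le_mul (hc i j k l) (hC i j k l) (abs_nonneg _) hK

theorem const_mul (c : ℝ) (hX : CrossBdd r m X) : CrossBdd r m fun i j k l => c * X i j k l :=
  bounded_mul (c := fun _ _ _ _ => c) (fun _ _ _ _ => le_rfl) hX

theorem cross_mul {c : ℤ → ℤ → ℤ → ℤ → ℝ} (hc : ∀ i j k l, |c i j k l| ≤ crossCov r i j k l)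
    (hX : CrossBdd r m X) : CrossBdd r (m + 1) fun i j k l => c i j k l * X i j k l := by
  obtain ⟨C, hC0, hC⟩ := hX
  refine ⟨C, hC0, fun i j k l => ?_⟩
  have := mul_le_mul (hc i j k l) (hC i j k l) (abs_nonneg _) (crossCov_nonneg r i j k l)
  rw [abs_mul, pow_succ]
  linarith

theorem zero (m : ℕ) : CrossBdd r m fun _ _ _ _ => 0 :=
  ⟨0, le_rfl, fun _ _ _ _ => by simp⟩

theorem swap (hX : CrossBdd r m X) : CrossBdd r m fun i j k l => X j i k l := by
  obtain ⟨C, hC0, hC⟩ := hX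
  refine ⟨C, hC0, fun i j k l => (hC j i k l).trans_eq ?_⟩
  simp only [crossCov]
  ring

end CrossBdd

/-- Mixed moment of four members of a sequence. -/
def mixedMoment (Z : ℤ → Ω → ℝ) (a b c d : ℕ) (i j k l : ℤ) : ℝ :=
  ∫ ω, Z i ω ^ a * Z j ω ^ b * Z k ω ^ c * Z l ω ^ d

/-- Covariance of `Z i ^ a * Z j ^ b` and `Z k ^ c * Z l ^ d`. -/
def mixedCov (Z : ℤ → Ω → ℝ) (a b c d : ℕ) (i j k l : ℤ) : ℝ :=
  mixedMoment Z a b c d i j k l - mixedMoment Z a b 0 0 i j k l * mixedMoment Z 0 0 c d i j k l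

theorem mixedMoment_swap (Z : ℤ → Ω → ℝ) (a b c d : ℕ) (i j k l : ℤ) :
    mixedMoment Z a b c d i j k l = mixedMoment Z b a c d j i k l := by
  simp only [mixedMoment, mul_comm (Z i _ ^ a)]

namespace IsCSG

variable {Z : ℤ → Ω → ℝ} {r : ℤ → ℝ}

theorem hasMoments (hZ : IsCSG Z r) (k : ℤ) : HasMoments (Z k) := hZ.memLp k

variable [IsProbabilityMeasure (ℙ : Measure Ω)]

theorem hasMoments_monomial (hZ : IsCSG Z r) (a b c d : ℕ) (i j k l : ℤ) :
    HasMoments fun ω => Z i ω ^ a * Z j ω ^ b * Z k ω ^ c * Z l ω ^ d :=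
  ((((hZ.hasMoments i).pow a).mul ((hZ.hasMoments j).pow b)).mul ((hZ.hasMoments k).pow c)).mul
    ((hZ.hasMoments l).pow d)

theorem abs_cov_le_one (hZ : IsCSG Z r) (h0 : r 0 = 1) (m : ℤ) : |r m| ≤ 1 := by
  have h1 := hZ.2.2.1 0 m
  have h2 : ∀ k, ∫ ω, Z k ω ^ 2 = 1 := fun k => by
    have := hZ.2.2.1 k k
    simpa [← pow_two, h0] using this
  rw [sub_zero] at h1
  rw [← h1]
  have i2 : ∀ k, Integrable (fun ω => Z k ω ^ 2) ℙ := fun k => ((hZ.hasMoments k).pow 2).integrable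
  have hb : ∫ ω, (Z 0 ω ^ 2 / 2 + Z m ω ^ 2 / 2) = 1 := by
    rw [integral_add ((i2 0).div_const 2) ((i2 m).div_const 2), integral_div, integral_div, h2, h2]
    norm_num
  rw [← hb, ← Real.norm_eq_abs]
  refine norm_integral_le_of_norm_le (((i2 0).div_const 2).add ((i2 m).div_const 2))
    (Eventually.of_forall fun ω => ?_)
  rw [Real.norm_eq_abs, abs_le]
  constructor <;> nlinarith [sq_nonneg (Z 0 ω + Z m ω), sq_nonneg (Z 0 ω - Z m ω)]

theorem mixedMoment_succ (hZ : IsCSG Z r) (h0 : r 0 = 1) (a b c d : ℕ) (i j k l : ℤ) :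
    mixedMoment Z (a + 1) b c d i j k l = a * mixedMoment Z (a - 1) b c d i j k l +
      r (j - i) * (b * mixedMoment Z a (b - 1) c d i j k l) +
      r (k - i) * (c * mixedMoment Z a b (c - 1) d i j k l) +
      r (l - i) * (d * mixedMoment Z a b c (d - 1) i j k l) := by
  have hm := hZ.hasMoments_monomial
  have i1 : ∀ (q : ℝ) a b c d, Integrable (fun ω => q * (Z i ω ^ a * Z j ω ^ b * Z k ω ^ c * Z l ω ^ d))
      (ℙ : Measure Ω) := fun q a b c d => ((hm a b c d i j k l).const_mul q).integrable
  have key := hZ.integral_mul_eq h0 i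
    (Φ := fun y => y i ^ a * y j ^ b * y k ^ c * y l ^ d)
    (Φ' := fun y => (a : ℝ) * (y i ^ (a - 1) * y j ^ b * y k ^ c * y l ^ d) +
      (r (j - i) * b) * (y i ^ a * y j ^ (b - 1) * y k ^ c * y l ^ d) +
      (r (k - i) * c) * (y i ^ a * y j ^ b * y k ^ (c - 1) * y l ^ d) +
      (r (l - i) * d) * (y i ^ a * y j ^ b * y k ^ c * y l ^ (d - 1)))
    (by fun_prop) (by fun_prop) (fun w t => ?_) (hm a b c d i j k l).integrable
    ((hZ.hasMoments i).mul (hm a b c d i j k l)).integrable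
    ((((i1 _ _ _ _ _).add (i1 _ _ _ _ _)).add (i1 _ _ _ _ _)).add (i1 _ _ _ _ _))
  · have e1 : mixedMoment Z (a + 1) b c d i j k l =
        ∫ ω, Z i ω * (Z i ω ^ a * Z j ω ^ b * Z k ω ^ c * Z l ω ^ d) :=
      integral_congr_ae (Eventually.of_forall fun ω => by simp only; ring)
    rw [e1, key]
    refine (integral_add_four (i1 _ _ _ _ _) (i1 _ _ _ _ _) (i1 _ _ _ _ _) (i1 _ _ _ _ _)).trans ?_
    simp only [integral_const_mul, mixedMoment]
    ring
  · have hl : ∀ m : ℤ, HasDerivAt (fun t : ℝ => w m + r (m - i) * t) (r (m - i)) t := fun m => by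
      simpa using ((hasDerivAt_id' t).const_mul (r (m - i))).const_add (w m)
    refine (((((hl i).pow a).mul ((hl j).pow b)).mul ((hl k).pow c)).mul
      ((hl l).pow d)).congr_deriv ?_
    simp only [sub_self, h0, Pi.mul_apply, Pi.pow_apply]
    ring

theorem mixedMoment_crossBdd (hZ : IsCSG Z r) (a b c d : ℕ) :
    CrossBdd r 0 (mixedMoment Z a b c d) := by
  let M : ℕ → ℝ := fun n => ∫ x, (x ^ n) ^ 4 ∂gaussianReal 0 (r 0).toNNReal
  have hM : ∀ n k, ∫ ω, (Z k ω ^ n) ^ 4 = M n := fun n k => by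
    simp only [M]
    rw [← hZ.map_eq k, integral_map (hZ.1 k).aemeasurable (by fun_prop)]
  have hMn : ∀ n, 0 ≤ M n := fun n => integral_nonneg fun x => by positivity
  have hi : ∀ n k, Integrable (fun ω => (Z k ω ^ n) ^ 4) (ℙ : Measure Ω) := fun n k =>
    (((hZ.hasMoments k).pow n).pow 4).integrable
  refine ⟨M a + M b + M c + M d, by linarith [hMn a, hMn b, hMn c, hMn d], fun i j k l => ?_⟩
  have hs : ∫ ω, ((Z i ω ^ a) ^ 4 + (Z j ω ^ b) ^ 4 + (Z k ω ^ c) ^ 4 + (Z l ω ^ d) ^ 4) =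
      M a + M b + M c + M d := by
    refine (integral_add_four (hi _ _) (hi _ _) (hi _ _) (hi _ _)).trans ?_
    simp only [hM]
  rw [pow_zero, mul_one, ← hs, ← Real.norm_eq_abs]
  refine norm_integral_le_of_norm_le ((((hi _ _).add (hi _ _)).add (hi _ _)).add (hi _ _))
    (Eventually.of_forall fun ω => ?_)
  generalize Z i ω ^ a = x, Z j ω ^ b = y, Z k ω ^ c = z, Z l ω ^ d = w
  have h1 : ∀ s t : ℝ, |s * t| ≤ (s ^ 2 + t ^ 2) / 2 := fun s t => by
    rw [abs_le]; constructor <;> nlinarith [sq_nonneg (s + t), sq_nonneg (s - t)]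
  rw [Real.norm_eq_abs, mul_assoc (x * y)]
  refine (h1 _ _).trans ?_
  nlinarith [sq_nonneg (x ^ 2 - y ^ 2), sq_nonneg (z ^ 2 - w ^ 2), sq_nonneg (x ^ 2),
    sq_nonneg (y ^ 2), sq_nonneg (z ^ 2), sq_nonneg (w ^ 2)]

theorem crossBdd_of_parity (hZ : IsCSG Z r) (h0 : r 0 = 1) (s : ℕ) :
    ∀ a b c d : ℕ, a + b = s → (Odd s → CrossBdd r 1 (mixedMoment Z a b c d)) ∧
      (Even s → CrossBdd r 2 (mixedCov Z a b c d)) := by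
  induction s using Nat.strong_induction_on with
  | _ s ih =>
  have hr1 : ∀ i j k l : ℤ, |(fun i j _ _ => r (j - i) : ℤ → ℤ → ℤ → ℤ → ℝ) i j k l| ≤ 1 :=
    fun i j _ _ => hZ.abs_cov_le_one h0 _
  have hc1 : ∀ i j k l : ℤ, |(fun i _ k _ => r (k - i) : ℤ → ℤ → ℤ → ℤ → ℝ) i j k l| ≤
      crossCov r i j k l := fun i j k l => by
    simp only [crossCov]; linarith [abs_nonneg (r (l - i)), abs_nonneg (r (k - j)),
      abs_nonneg (r (l - j))]
  have hc2 : ∀ i j k l : ℤ, |(fun i _ _ l => r (l - i) : ℤ → ℤ → ℤ → ℤ → ℝ) i j k l| ≤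
      crossCov r i j k l := fun i j k l => by
    simp only [crossCov]; linarith [abs_nonneg (r (k - i)), abs_nonneg (r (k - j)),
      abs_nonneg (r (l - j))]
  have step : ∀ a b c d : ℕ, a + 1 + b = s → (Odd s → CrossBdd r 1 (mixedMoment Z (a + 1) b c d)) ∧
      (Even s → CrossBdd r 2 (mixedCov Z (a + 1) b c d)) := by
    intro a b c d hs
    have t1 : (Odd s → CrossBdd r 1 fun i j k l => a * mixedMoment Z (a - 1) b c d i j k l) ∧
        (Even s → CrossBdd r 2 fun i j k l => a * mixedCov Z (a - 1) b c d i j k l) := by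
      rcases Nat.eq_zero_or_pos a with rfl | ha
      · simpa using ⟨fun _ => CrossBdd.zero 1, fun _ => CrossBdd.zero 2⟩
      · obtain ⟨u1, u2⟩ := ih (s - 2) (by omega) (a - 1) b c d (by omega)
        exact ⟨fun h => (u1 (by grind)).const_mul _, fun h => (u2 (by grind)).const_mul _⟩
    have t2 : (Odd s → CrossBdd r 1 fun i j k l => b * mixedMoment Z a (b - 1) c d i j k l) ∧
        (Even s → CrossBdd r 2 fun i j k l => b * mixedCov Z a (b - 1) c d i j k l) := by
      rcases Nat.eq_zero_or_pos b with rfl | hb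
      · simpa using ⟨fun _ => CrossBdd.zero 1, fun _ => CrossBdd.zero 2⟩
      · obtain ⟨u1, u2⟩ := ih (s - 2) (by omega) a (b - 1) c d (by omega)
        exact ⟨fun h => (u1 (by grind)).const_mul _, fun h => (u2 (by grind)).const_mul _⟩
    refine ⟨fun h => ?_, fun h => ?_⟩
    · have := (((t1.1 h).add ((t2.1 h).bounded_mul hr1)).add
        (((hZ.mixedMoment_crossBdd a b (c - 1) d).const_mul c).cross_mul hc1)).add
        (((hZ.mixedMoment_crossBdd a b c (d - 1)).const_mul d).cross_mul hc2)
      convert this using 5 with i j k l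
      exact hZ.mixedMoment_succ h0 a b c d i j k l
    · have u := fun c d => (ih (s - 1) (by omega) a b c d (by omega)).1 (by grind)
      have := (((t1.2 h).add ((t2.2 h).bounded_mul hr1)).add
        (((u (c - 1) d).const_mul c).cross_mul hc1)).add
        (((u c (d - 1)).const_mul d).cross_mul hc2)
      convert this using 5 with i j k l
      simp only [mixedCov, hZ.mixedMoment_succ h0 a b]
      simp
      ring
  intro a b c d hs
  rcases a with _ | a
  · rcases b with _ | b
    · subst hs
      refine ⟨fun h => by simp at h, fun _ => ?_⟩
      convert CrossBdd.zero (r := r) 2 using 5 with i j k l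
      simp [mixedCov, mixedMoment]
    · obtain ⟨u1, u2⟩ := step b 0 c d (by omega)
      refine ⟨fun h => ?_, fun h => ?_⟩
      · have e : mixedMoment Z 0 (b + 1) c d = fun i j k l => mixedMoment Z (b + 1) 0 c d j i k l := by
          funext i j k l
          exact mixedMoment_swap Z 0 (b + 1) c d i j k l
        exact e ▸ (u1 h).swap
      · have e : mixedCov Z 0 (b + 1) c d = fun i j k l => mixedCov Z (b + 1) 0 c d j i k l := by
          funext i j k l
          simp only [mixedCov]
          rw [mixedMoment_swap Z 0 (b + 1) c d i j k l, mixedMoment_swap Z 0 (b + 1) 0 0 i j k l,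
            mixedMoment_swap Z 0 0 c d i j k l]
        exact e ▸ (u2 h).swap
  · exact step a b c d hs

end IsCSG

theorem tendsto_sq_sum_abs_div {ρ : ℤ → ℝ} (hs : Summable fun m => ρ m ^ 2) :
    Tendsto (fun n : ℕ => (∑ m ∈ Finset.Icc (-n : ℤ) n, |ρ m|) ^ 2 / n) atTop (nhds 0) := by
  rw [Metric.tendsto_atTop]
  intro ε hε
  obtain ⟨F, hF⟩ := summable_iff_vanishing_norm.1 hs (ε / 12) (by positivity)
  set A := ∑ m ∈ F, |ρ m| with hA
  obtain ⟨N, hN⟩ := exists_nat_gt (4 * A ^ 2 / ε)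
  refine ⟨N + 1, fun n hn => ?_⟩
  have hn1 : (1 : ℝ) ≤ n := by exact_mod_cast (by omega : 1 ≤ n)
  have hnN : (N : ℝ) ≤ n := by exact_mod_cast (by omega : N ≤ n)
  set I := Finset.Icc (-n : ℤ) n with hI
  have h1 : ∑ m ∈ I ∩ F, |ρ m| ≤ A :=
    Finset.sum_le_sum_of_subset_of_nonneg Finset.inter_subset_right fun _ _ _ => abs_nonneg _
  have h1' : 0 ≤ ∑ m ∈ I ∩ F, |ρ m| := Finset.sum_nonneg fun _ _ => abs_nonneg _
  have h2 : (∑ m ∈ I \ F, |ρ m|) ^ 2 ≤ (2 * n + 1) * ∑ m ∈ I \ F, ρ m ^ 2 := by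
    have := sq_sum_le_card_mul_sum_sq (s := I \ F) (f := fun m => |ρ m|)
    simp only [sq_abs] at this
    refine this.trans (mul_le_mul_of_nonneg_right ?_ (Finset.sum_nonneg fun _ _ => sq_nonneg _))
    have hc : (I \ F).card ≤ 2 * n + 1 := (Finset.card_le_card Finset.sdiff_subset).trans (by
      rw [hI, Int.card_Icc]; omega)
    exact_mod_cast hc
  have h3 : ∑ m ∈ I \ F, ρ m ^ 2 < ε / 12 :=
    (le_abs_self _).trans_lt (hF _ Finset.sdiff_disjoint)
  have h4 : ∑ m ∈ I, |ρ m| = ∑ m ∈ I ∩ F, |ρ m| + ∑ m ∈ I \ F, |ρ m| :=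
    (Finset.sum_inter_add_sum_sdiff ..).symm
  have h5 : 4 * A ^ 2 < ε * n := by
    rw [div_lt_iff₀ hε] at hN
    nlinarith
  rw [Real.dist_eq, sub_zero, abs_of_nonneg (by positivity), div_lt_iff₀ (by linarith), h4]
  set x := ∑ m ∈ I ∩ F, |ρ m|
  set y := ∑ m ∈ I \ F, |ρ m|
  have h6 : (2 * n + 1) * ∑ m ∈ I \ F, ρ m ^ 2 ≤ (3 * n) * (ε / 12) :=
    mul_le_mul (by linarith) h3.le (Finset.sum_nonneg fun _ _ => sq_nonneg _) (by positivity)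
  have h7 : x ^ 2 ≤ A ^ 2 := pow_le_pow_left₀ h1' h1 2
  nlinarith [sq_nonneg (x - y)]

theorem sum_range_shift_le {g : ℤ → ℝ} (hg : ∀ m, 0 ≤ g m) {n i : ℕ} (hi : i < n) :
    ∑ j ∈ Finset.range n, g (j - i) ≤ ∑ m ∈ Finset.Icc (-n : ℤ) n, g m := by
  have hinj : Set.InjOn (fun j : ℕ => (j : ℤ) - i) (Finset.range n) := fun a _ b _ h => by
    simp only at h; omega
  rw [← Finset.sum_image (f := g) hinj]
  refine Finset.sum_le_sum_of_subset_of_nonneg (fun m hm => ?_) fun _ _ _ => hg _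
  simp only [Finset.mem_image, Finset.mem_range] at hm
  obtain ⟨j, hj, rfl⟩ := hm
  rw [Finset.mem_Icc]
  omega

theorem sum_tree_le {n : ℕ} {g h e : ℕ → ℕ → ℝ} {S Q : ℝ} (hg : ∀ i j, 0 ≤ g i j)
    (hh : ∀ i j, 0 ≤ h i j) (he : ∀ i j, 0 ≤ e i j)
    (hgS : ∀ i < n, ∑ j ∈ Finset.range n, g i j ≤ S)
    (hhS : ∀ i < n, ∑ j ∈ Finset.range n, h i j ≤ S)
    (heQ : ∀ i < n, ∑ j ∈ Finset.range n, e i j ≤ Q) :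
    ∑ i ∈ Finset.range n, ∑ j ∈ Finset.range n, ∑ k ∈ Finset.range n, ∑ l ∈ Finset.range n,
      g i j * h k l * e i k ≤ n * (S ^ 2 * Q) := by
  have key : ∀ i ∈ Finset.range n, ∑ j ∈ Finset.range n, ∑ k ∈ Finset.range n,
      ∑ l ∈ Finset.range n, g i j * h k l * e i k ≤ S ^ 2 * Q := fun i hi => by
    have hS : 0 ≤ S := (Finset.sum_nonneg fun j _ => hg i j).trans (hgS i (Finset.mem_range.1 hi))
    have e1 : ∑ j ∈ Finset.range n, ∑ k ∈ Finset.range n, ∑ l ∈ Finset.range n,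
        g i j * h k l * e i k = (∑ j ∈ Finset.range n, g i j) *
          ∑ k ∈ Finset.range n, (∑ l ∈ Finset.range n, h k l) * e i k := by
      rw [Finset.sum_mul]
      refine Finset.sum_congr rfl fun j _ => ?_
      rw [Finset.mul_sum]
      refine Finset.sum_congr rfl fun k _ => ?_
      rw [Finset.sum_mul, Finset.mul_sum]
      exact Finset.sum_congr rfl fun l _ => by ring
    have e2 : ∑ k ∈ Finset.range n, (∑ l ∈ Finset.range n, h k l) * e i k ≤ S * Q :=
      calc _ ≤ ∑ k ∈ Finset.range n, S * e i k := Finset.sum_le_sum fun k hk =>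
            mul_le_mul_of_nonneg_right (hhS k (Finset.mem_range.1 hk)) (he i k)
        _ ≤ S * Q := by
            rw [← Finset.mul_sum]
            exact mul_le_mul_of_nonneg_left (heQ i (Finset.mem_range.1 hi)) hS
    rw [e1, pow_two, mul_assoc]
    refine mul_le_mul (hgS i (Finset.mem_range.1 hi)) e2 ?_ hS
    exact Finset.sum_nonneg fun k _ => mul_nonneg (Finset.sum_nonneg fun l _ => hh k l) (he i k)
  refine (Finset.sum_le_sum key).trans_eq ?_
  simp

theorem sum_abs_mul_crossCov_sq_le {ρ : ℤ → ℝ} (hs : Summable fun m => ρ m ^ 2)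
    (hsymm : ∀ m, ρ (-m) = ρ m) (n : ℕ) :
    ∑ i ∈ Finset.range n, ∑ j ∈ Finset.range n, ∑ k ∈ Finset.range n, ∑ l ∈ Finset.range n,
      |ρ (j - i)| * |ρ (l - k)| * crossCov ρ i j k l ^ 2 ≤
    16 * (n * ((∑ m ∈ Finset.Icc (-n : ℤ) n, |ρ m|) ^ 2 * ∑' m, ρ m ^ 2)) := by
  set S := ∑ m ∈ Finset.Icc (-n : ℤ) n, |ρ m|
  set Q := ∑' m, ρ m ^ 2
  set R := Finset.range n
  have hsub : ∀ x y : ℤ, ρ (x - y) = ρ (y - x) := fun x y => by rw [← hsymm, neg_sub]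
  have hS : ∀ i < n, ∑ j ∈ R, |ρ (j - i)| ≤ S := fun i hi =>
    sum_range_shift_le (g := fun m => |ρ m|) (fun _ => abs_nonneg _) hi
  have hQ : ∀ i < n, ∑ j ∈ R, ρ (j - i) ^ 2 ≤ Q := fun i hi =>
    (sum_range_shift_le (g := fun m => ρ m ^ 2) (fun _ => sq_nonneg _) hi).trans
      (hs.sum_le_tsum _ fun _ _ => sq_nonneg _)
  have base : ∑ i ∈ R, ∑ j ∈ R, ∑ k ∈ R, ∑ l ∈ R,
      |ρ (j - i)| * |ρ (l - k)| * ρ (k - i) ^ 2 ≤ n * (S ^ 2 * Q) :=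
    sum_tree_le (g := fun i j => |ρ (j - i)|) (h := fun k l => |ρ (l - k)|)
      (e := fun i k => ρ (k - i) ^ 2) (fun _ _ => abs_nonneg _) (fun _ _ => abs_nonneg _)
      (fun _ _ => sq_nonneg _) hS hS hQ
  have b2 : ∑ i ∈ R, ∑ j ∈ R, ∑ k ∈ R, ∑ l ∈ R,
      |ρ (j - i)| * |ρ (l - k)| * ρ (l - i) ^ 2 ≤ n * (S ^ 2 * Q) := by
    refine le_of_eq_of_le ?_ base
    refine Finset.sum_congr rfl fun i _ => Finset.sum_congr rfl fun j _ => ?_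
    rw [Finset.sum_comm]
    exact Finset.sum_congr rfl fun k _ => Finset.sum_congr rfl fun l _ => by rw [hsub k l]
  have b3 : ∑ i ∈ R, ∑ j ∈ R, ∑ k ∈ R, ∑ l ∈ R,
      |ρ (j - i)| * |ρ (l - k)| * ρ (k - j) ^ 2 ≤ n * (S ^ 2 * Q) := by
    refine le_of_eq_of_le ?_ base
    rw [Finset.sum_comm]
    exact Finset.sum_congr rfl fun i _ => Finset.sum_congr rfl fun j _ =>
      Finset.sum_congr rfl fun k _ => Finset.sum_congr rfl fun l _ => by rw [hsub i j]
  have b4 : ∑ i ∈ R, ∑ j ∈ R, ∑ k ∈ R, ∑ l ∈ R,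
      |ρ (j - i)| * |ρ (l - k)| * ρ (l - j) ^ 2 ≤ n * (S ^ 2 * Q) := by
    refine le_of_eq_of_le ?_ b2
    rw [Finset.sum_comm]
    exact Finset.sum_congr rfl fun i _ => Finset.sum_congr rfl fun j _ =>
      Finset.sum_congr rfl fun k _ => Finset.sum_congr rfl fun l _ => by rw [hsub i j]
  have hpt : ∀ i j k l : ℕ, |ρ (j - i)| * |ρ (l - k)| * crossCov ρ i j k l ^ 2 ≤
      4 * (|ρ (j - i)| * |ρ (l - k)| * ρ (k - i) ^ 2 + |ρ (j - i)| * |ρ (l - k)| * ρ (l - i) ^ 2 +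
        |ρ (j - i)| * |ρ (l - k)| * ρ (k - j) ^ 2 + |ρ (j - i)| * |ρ (l - k)| * ρ (l - j) ^ 2) := by
    intro i j k l
    have h : crossCov ρ i j k l ^ 2 ≤
        4 * (ρ (k - i) ^ 2 + ρ (l - i) ^ 2 + ρ (k - j) ^ 2 + ρ (l - j) ^ 2) := by
      simp only [crossCov, ← sq_abs (ρ _)]
      generalize |ρ (k - i)| = x, |ρ (l - i)| = y, |ρ (k - j)| = z, |ρ (l - j)| = w
      nlinarith [sq_nonneg (x - y), sq_nonneg (x - z), sq_nonneg (x - w), sq_nonneg (y - z),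
        sq_nonneg (y - w), sq_nonneg (z - w)]
    refine (mul_le_mul_of_nonneg_left h (by positivity)).trans_eq (by ring)
  have h4 := Finset.sum_le_sum fun i (_ : i ∈ R) => Finset.sum_le_sum fun j (_ : j ∈ R) =>
    Finset.sum_le_sum fun k (_ : k ∈ R) => Finset.sum_le_sum fun l (_ : l ∈ R) => hpt i j k l
  refine h4.trans ?_
  simp only [← Finset.mul_sum, Finset.sum_add_distrib]
  linarith

theorem sq_integral_abs_le [IsProbabilityMeasure (ℙ : Measure Ω)] {X : Ω → ℝ}
    (hX : MemLp X 2 (ℙ : Measure Ω)) : (∫ ω, |X ω|) ^ 2 ≤ ∫ ω, X ω ^ 2 := by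
  have h := variance_eq_sub hX.abs
  have h0 := variance_nonneg |X| (ℙ : Measure Ω)
  rw [h] at h0
  simp only [Pi.pow_apply, Pi.abs_apply, sq_abs] at h0
  linarith

/-- Covariance-weighted average of the monomials `Z i ^ a * Z j ^ b`. -/
def pairAverage (ρ : ℤ → ℝ) (Z : ℤ → Ω → ℝ) (a b n : ℕ) (ω : Ω) : ℝ :=
  1 / (n : ℝ) * ∑ i ∈ Finset.range n, ∑ j ∈ Finset.range n, ρ (j - i) * (Z i ω ^ a * Z j ω ^ b)

namespace IsCSG

variable {Z : ℤ → Ω → ℝ} {r : ℤ → ℝ} [IsProbabilityMeasure (ℙ : Measure Ω)]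

theorem hasMoments_pairAverage (hZ : IsCSG Z r) (a b n : ℕ) :
    HasMoments (pairAverage r Z a b n) :=
  .const_mul _ (.sum _ fun i _ => .sum _ fun j _ =>
    .const_mul _ (((hZ.hasMoments i).pow a).mul ((hZ.hasMoments j).pow b)))

theorem covariance_monomial_eq (hZ : IsCSG Z r) (a b c d : ℕ) (i j k l : ℤ) :
    covariance (fun ω => Z i ω ^ a * Z j ω ^ b) (fun ω => Z k ω ^ c * Z l ω ^ d)
      (ℙ : Measure Ω) = mixedCov Z a b c d i j k l := by
  have h : ∀ a b i j, HasMoments fun ω => Z i ω ^ a * Z j ω ^ b := fun a b i j =>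
    ((hZ.hasMoments i).pow a).mul ((hZ.hasMoments j).pow b)
  rw [covariance_eq_sub (h a b i j 2) (h c d k l 2)]
  simp [mixedCov, mixedMoment, mul_assoc]

theorem exists_variance_pairAverage_le (hZ : IsCSG Z r) (h0 : r 0 = 1)
    (hs : Summable fun m => r m ^ 2) {a b : ℕ} (hab : Even (a + b)) :
    ∃ C, ∀ n : ℕ, variance (pairAverage r Z a b n) (ℙ : Measure Ω) ≤
      C * ((∑ m ∈ Finset.Icc (-n : ℤ) n, |r m|) ^ 2 / n) := by
  obtain ⟨C, hC0, hC⟩ := (hZ.crossBdd_of_parity h0 (a + b) a b a b rfl).2 hab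
  refine ⟨C * 16 * ∑' m, r m ^ 2, fun n => ?_⟩
  rcases Nat.eq_zero_or_pos n with rfl | hn
  · have e : pairAverage r Z a b 0 = fun _ => 0 := by ext; simp [pairAverage]
    rw [e]
    simp only [Nat.cast_zero, div_zero, mul_zero]
    exact (variance_zero (ℙ : Measure Ω)).le
  have hmem : ∀ i j : ℕ, HasMoments fun ω => r (j - i) * (Z i ω ^ a * Z j ω ^ b) := fun i j =>
    .const_mul _ (((hZ.hasMoments i).pow a).mul ((hZ.hasMoments j).pow b))
  have hmem' : ∀ i : ℕ, HasMoments fun ω => ∑ j ∈ Finset.range n,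
      r (j - i) * (Z i ω ^ a * Z j ω ^ b) := fun i => .sum _ fun j _ => hmem i j
  have hv : variance (pairAverage r Z a b n) (ℙ : Measure Ω) = (1 / (n : ℝ)) ^ 2 *
      ∑ i ∈ Finset.range n, ∑ j ∈ Finset.range n, ∑ k ∈ Finset.range n, ∑ l ∈ Finset.range n,
        r (j - i) * (r (l - k) * mixedCov Z a b a b i j k l) := by
    unfold pairAverage
    rw [variance_const_mul, variance_fun_sum' (fun i _ => hmem' i 2)]
    congr 1
    refine Finset.sum_congr rfl fun i _ => ?_
    rw [Finset.sum_comm]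
    refine Finset.sum_congr rfl fun k _ => ?_
    rw [covariance_fun_sum_fun_sum' (fun j _ => hmem i j 2) (fun l _ => hmem k l 2)]
    refine Finset.sum_congr rfl fun j _ => Finset.sum_congr rfl fun l _ => ?_
    rw [covariance_const_mul_left, covariance_const_mul_right, hZ.covariance_monomial_eq]
  have hpt : ∀ i j k l : ℕ, r (j - i) * (r (l - k) * mixedCov Z a b a b i j k l) ≤
      C * (|r (j - i)| * |r (l - k)| * crossCov r i j k l ^ 2) := fun i j k l => by
    refine (le_abs_self _).trans ?_
    rw [abs_mul, abs_mul, ← mul_assoc]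
    refine (mul_le_mul_of_nonneg_left (hC i j k l) (by positivity)).trans_eq (by ring)
  have hle := Finset.sum_le_sum fun i (_ : i ∈ Finset.range n) =>
    Finset.sum_le_sum fun j (_ : j ∈ Finset.range n) =>
    Finset.sum_le_sum fun k (_ : k ∈ Finset.range n) =>
    Finset.sum_le_sum fun l (_ : l ∈ Finset.range n) => hpt i j k l
  simp only [← Finset.mul_sum] at hle
  have hn' : (0 : ℝ) < n := by exact_mod_cast hn
  have htree := mul_le_mul_of_nonneg_left (sum_abs_mul_crossCov_sq_le hs hZ.symm n) hC0
  have hfin := mul_le_mul_of_nonneg_left (hle.trans htree) (sq_nonneg (1 / (n : ℝ)))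
  rw [hv]
  simp only [← Finset.mul_sum] at hfin ⊢
  refine hfin.trans_eq ?_
  field_simp

theorem tendsto_integral_abs_pairAverage_sub (hZ : IsCSG Z r) (h0 : r 0 = 1)
    (hs : Summable fun m => r m ^ 2) {a b : ℕ} (hab : Even (a + b)) :
    Tendsto (fun n => ∫ ω, |pairAverage r Z a b n ω - ∫ ω', pairAverage r Z a b n ω'|)
      atTop (nhds 0) := by
  obtain ⟨C, hC⟩ := hZ.exists_variance_pairAverage_le h0 hs hab
  have hlim : Tendsto (fun n : ℕ => √(C * ((∑ m ∈ Finset.Icc (-n : ℤ) n, |r m|) ^ 2 / n))) atTop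
      (nhds 0) := by
    simpa using ((tendsto_sq_sum_abs_div hs).const_mul C).sqrt
  refine squeeze_zero (fun n => integral_nonneg fun ω => abs_nonneg _) (fun n => ?_) hlim
  refine Real.le_sqrt_of_sq_le ((sq_integral_abs_le ?_).trans ?_)
  · exact (hZ.hasMoments_pairAverage a b n 2).sub (memLp_const _)
  · refine le_of_eq_of_le ?_ (hC n)
    rw [variance_eq_integral (hZ.hasMoments_pairAverage a b n 2).aemeasurable]

end IsCSG

/-- Probabilists' Hermite polynomials with real coefficients. -/
def hermiteR (m : ℕ) : Polynomial ℝ := (Polynomial.hermite m).map (Int.castRingHom ℝ)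

theorem hermiteFun_eq_eval (m : ℕ) (x : ℝ) : hermiteFun m x = (hermiteR m).eval x := by
  rw [hermiteFun, hermiteR, Polynomial.aeval_def, Polynomial.eval₂_eq_eval_map]
  rfl

theorem hermiteR_zero : hermiteR 0 = 1 := by simp [hermiteR]

theorem hermiteR_succ (m : ℕ) :
    hermiteR (m + 1) = Polynomial.X * hermiteR m - Polynomial.derivative (hermiteR m) := by
  simp [hermiteR, Polynomial.hermite_succ, Polynomial.derivative_map]

theorem derivative_hermiteR_succ (m : ℕ) :
    Polynomial.derivative (hermiteR (m + 1)) = ((m : ℝ) + 1) • hermiteR m := by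
  induction m with
  | zero => simp [hermiteR_succ, hermiteR_zero]
  | succ m ih =>
    rw [hermiteR_succ (m + 1), Polynomial.derivative_sub, Polynomial.derivative_mul, ih,
      Polynomial.derivative_X, Polynomial.derivative_smul, hermiteR_succ m, Nat.cast_succ]
    simp only [Polynomial.smul_eq_C_mul, map_add, map_one]
    ring

theorem derivative_hermiteR (m : ℕ) :
    Polynomial.derivative (hermiteR m) = (m : ℝ) • hermiteR (m - 1) := by
  rcases m with _ | m
  · simp [hermiteR_zero]
  · simpa using derivative_hermiteR_succ m

theorem coeff_hermiteR_of_odd_add {m k : ℕ} (h : Odd (m + k)) : (hermiteR m).coeff k = 0 := by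
  simp [hermiteR, Polynomial.coeff_hermite_of_odd_add h]

namespace IsCSG

variable {Z : ℤ → Ω → ℝ} {r : ℤ → ℝ} [IsProbabilityMeasure (ℙ : Measure Ω)]

theorem hasMoments_eval_mul_eval (hZ : IsCSG Z r) (P Q : Polynomial ℝ) (i j : ℤ) :
    HasMoments fun ω => P.eval (Z i ω) * Q.eval (Z j ω) :=
  ((hZ.hasMoments i).polynomial_eval P).mul ((hZ.hasMoments j).polynomial_eval Q)

theorem integral_mul_eval_mul_eval (hZ : IsCSG Z r) (h0 : r 0 = 1) (P Q : Polynomial ℝ)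
    (i j : ℤ) :
    ∫ ω, Z i ω * (P.eval (Z i ω) * Q.eval (Z j ω)) =
      (∫ ω, P.derivative.eval (Z i ω) * Q.eval (Z j ω)) +
        r (j - i) * ∫ ω, P.eval (Z i ω) * Q.derivative.eval (Z j ω) := by
  have hm := hZ.hasMoments_eval_mul_eval
  have key := hZ.integral_mul_eq h0 i
    (Φ := fun y => P.eval (y i) * Q.eval (y j))
    (Φ' := fun y => P.derivative.eval (y i) * Q.eval (y j) +
      r (j - i) * (P.eval (y i) * Q.derivative.eval (y j)))
    ((P.continuous.measurable.comp (measurable_pi_apply i)).mul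
      (Q.continuous.measurable.comp (measurable_pi_apply j)))
    (((P.derivative.continuous.measurable.comp (measurable_pi_apply i)).mul
      (Q.continuous.measurable.comp (measurable_pi_apply j))).add
      (((P.continuous.measurable.comp (measurable_pi_apply i)).mul
      (Q.derivative.continuous.measurable.comp (measurable_pi_apply j))).const_mul _))
    (fun w t => ?_) (hm P Q i j).integrable
    ((hZ.hasMoments i).mul (hm P Q i j)).integrable
    ((hm _ _ i j).add ((hm _ _ i j).const_mul _)).integrable
  · rw [key, integral_add (hm _ _ i j).integrable ((hm _ _ i j).const_mul _).integrable,
      integral_const_mul]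
  · have hl : ∀ m : ℤ, HasDerivAt (fun t : ℝ => w m + r (m - i) * t) (r (m - i)) t := fun m => by
      simpa using ((hasDerivAt_id' t).const_mul (r (m - i))).const_add (w m)
    refine (((P.hasDerivAt _).comp t (hl i)).mul ((Q.hasDerivAt _).comp t (hl j))).congr_deriv ?_
    simp only [sub_self, h0, Function.comp_apply]
    ring

theorem integral_hermiteR_succ_mul_eval (hZ : IsCSG Z r) (h0 : r 0 = 1) (m : ℕ)
    (Q : Polynomial ℝ) (i j : ℤ) :
    ∫ ω, (hermiteR (m + 1)).eval (Z i ω) * Q.eval (Z j ω) =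
      r (j - i) * ∫ ω, (hermiteR m).eval (Z i ω) * Q.derivative.eval (Z j ω) := by
  have hm := hZ.hasMoments_eval_mul_eval
  have h := hZ.integral_mul_eval_mul_eval h0 (hermiteR m) Q i j
  have e : ∫ ω, (hermiteR (m + 1)).eval (Z i ω) * Q.eval (Z j ω) =
      ∫ ω, (Z i ω * ((hermiteR m).eval (Z i ω) * Q.eval (Z j ω)) -
        (hermiteR m).derivative.eval (Z i ω) * Q.eval (Z j ω)) := by
    refine integral_congr_ae (Eventually.of_forall fun ω => ?_)
    simp only [hermiteR_succ, Polynomial.eval_sub, Polynomial.eval_mul, Polynomial.eval_X]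
    ring
  rw [e, integral_sub ((hZ.hasMoments i).mul (hm _ _ i j)).integrable (hm _ _ i j).integrable, h]
  ring

theorem integral_hermiteR (hZ : IsCSG Z r) (h0 : r 0 = 1) (m : ℕ) (i : ℤ) :
    ∫ ω, (hermiteR m).eval (Z i ω) = if m = 0 then 1 else 0 := by
  rcases m with _ | m
  · simp [hermiteR_zero]
  · simpa using hZ.integral_hermiteR_succ_mul_eval h0 m 1 i i

theorem integral_hermiteR_mul_hermiteR (hZ : IsCSG Z r) (h0 : r 0 = 1) (m l : ℕ) (i j : ℤ) :
    ∫ ω, (hermiteR m).eval (Z i ω) * (hermiteR l).eval (Z j ω) =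
      if m = l then m.factorial * r (j - i) ^ m else 0 := by
  induction m generalizing l with
  | zero =>
    simp only [hermiteR_zero, Polynomial.eval_one, one_mul, hZ.integral_hermiteR h0,
      Nat.factorial_zero, Nat.cast_one, pow_zero, mul_one, eq_comm]
  | succ m ih =>
    rw [hZ.integral_hermiteR_succ_mul_eval h0, derivative_hermiteR]
    simp only [Polynomial.eval_smul, smul_eq_mul, mul_left_comm _ (l : ℝ), integral_const_mul, ih]
    rcases l with _ | l
    · simp
    · simp only [Nat.add_sub_cancel, Nat.add_right_cancel_iff, Nat.factorial_succ]
      split_ifs with h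
      · subst h; push_cast; ring
      · simp

end IsCSG

theorem sum_range_sub_add_sum_range_sub (κ : ℤ → ℝ) (n : ℕ) :
    ∑ i ∈ Finset.range n, κ (n - i) + ∑ j ∈ Finset.range n, κ (j - n) + κ 0 =
      ∑ m ∈ Finset.Icc (-n : ℤ) n, κ m := by
  induction n with
  | zero => simp
  | succ n ih =>
    push_cast
    rw [Finset.sum_Icc_succ_eq_add_endpoints, ← ih, Finset.sum_range_succ', Finset.sum_range_succ']
    simp only [Nat.cast_add, Nat.cast_one, add_sub_add_right_eq_sub, Nat.cast_zero, sub_zero,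
      zero_sub]
    ring

theorem tendsto_average_sum_sub {κ : ℤ → ℝ} (hκ : Summable κ) :
    Tendsto (fun n : ℕ => 1 / (n : ℝ) * ∑ i ∈ Finset.range n, ∑ j ∈ Finset.range n, κ (j - i))
      atTop (nhds (∑' m, κ m)) := by
  have h1 : Tendsto (fun n : ℕ => ∑ m ∈ Finset.Icc (-n : ℤ) n, κ m) atTop (nhds (∑' m, κ m)) := by
    have h := (hκ.hasSum.mono_left (SummationFilter.symmetricIcc ℤ).le_atTop)
    rwa [SummationFilter.symmetricIcc_eq_map_Icc_nat, tendsto_map'_iff] at h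
  have h2 : ∀ n : ℕ, ∑ i ∈ Finset.range n, ∑ j ∈ Finset.range n, κ (j - i) =
      ∑ k ∈ Finset.range n, ∑ m ∈ Finset.Icc (-k : ℤ) k, κ m := fun n => by
    induction n with
    | zero => simp
    | succ n ih =>
      rw [Finset.sum_range_succ (fun k : ℕ => ∑ m ∈ Finset.Icc (-k : ℤ) k, κ m), ← ih,
        ← sum_range_sub_add_sum_range_sub]
      simp only [Finset.sum_range_succ, Finset.sum_add_distrib, sub_self]
      ring
  simpa [h2] using h1.cesaro

/-- Covariance-weighted average of `A (Z i) * B (Z j)`, for polynomials `A` and `B`. -/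
def polyAverage (ρ : ℤ → ℝ) (Z : ℤ → Ω → ℝ) (A B : Polynomial ℝ) (n : ℕ) (ω : Ω) : ℝ :=
  1 / (n : ℝ) * ∑ i ∈ Finset.range n, ∑ j ∈ Finset.range n,
    ρ (j - i) * (A.eval (Z i ω) * B.eval (Z j ω))

theorem polyAverage_eq_sum {Ω : Type*} (ρ : ℤ → ℝ) (Z : ℤ → Ω → ℝ)
    (A B : Polynomial ℝ) (n : ℕ) (ω : Ω) :
    polyAverage ρ Z A B n ω = ∑ a ∈ Finset.range (A.natDegree + 1),
      ∑ b ∈ Finset.range (B.natDegree + 1),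
        A.coeff a * B.coeff b * pairAverage ρ Z a b n ω := by
  simp only [polyAverage, pairAverage, Polynomial.eval_eq_sum_range]
  simp_rw [Finset.sum_mul_sum]
  simp only [Finset.mul_sum]
  have e : ∀ f : ℕ → ℕ → ℕ → ℕ → ℝ, ∑ i ∈ Finset.range n, ∑ j ∈ Finset.range n,
      ∑ a ∈ Finset.range (A.natDegree + 1), ∑ b ∈ Finset.range (B.natDegree + 1), f i j a b =
      ∑ a ∈ Finset.range (A.natDegree + 1), ∑ b ∈ Finset.range (B.natDegree + 1),
        ∑ i ∈ Finset.range n, ∑ j ∈ Finset.range n, f i j a b := fun f => by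
    simpa only [Finset.sum_product] using Finset.sum_comm (s := Finset.range n ×ˢ Finset.range n)
      (t := Finset.range (A.natDegree + 1) ×ˢ Finset.range (B.natDegree + 1))
      (f := fun p q => f p.1 p.2 q.1 q.2)
  rw [e]
  refine Finset.sum_congr rfl fun a _ => Finset.sum_congr rfl fun b _ =>
    Finset.sum_congr rfl fun i _ => Finset.sum_congr rfl fun j _ => ?_
  ring

namespace IsCSG

variable {Z : ℤ → Ω → ℝ} {r : ℤ → ℝ} [IsProbabilityMeasure (ℙ : Measure Ω)]

theorem hasMoments_polyAverage (hZ : IsCSG Z r) (A B : Polynomial ℝ) (n : ℕ) :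
    HasMoments (polyAverage r Z A B n) :=
  .const_mul _ (.sum _ fun i _ => .sum _ fun j _ =>
    .const_mul _ (hZ.hasMoments_eval_mul_eval A B i j))

theorem tendsto_integral_abs_polyAverage_sub (hZ : IsCSG Z r) (h0 : r 0 = 1)
    (hs : Summable fun m => r m ^ 2) {A B : Polynomial ℝ}
    (hAB : ∀ a b, A.coeff a ≠ 0 → B.coeff b ≠ 0 → Even (a + b)) :
    Tendsto (fun n => ∫ ω, |polyAverage r Z A B n ω - ∫ ω', polyAverage r Z A B n ω'|)
      atTop (nhds 0) := by
  have hi : ∀ a b n, Integrable (pairAverage r Z a b n) (ℙ : Measure Ω) := fun a b n =>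
    (hZ.hasMoments_pairAverage a b n).integrable
  have hI : ∀ a b n, Integrable (fun ω => |A.coeff a * B.coeff b| *
      |pairAverage r Z a b n ω - ∫ ω', pairAverage r Z a b n ω'|) (ℙ : Measure Ω) := fun a b n =>
    (((hi a b n).sub (integrable_const _)).abs).const_mul _
  have hlim : Tendsto (fun n => ∑ a ∈ Finset.range (A.natDegree + 1),
      ∑ b ∈ Finset.range (B.natDegree + 1), |A.coeff a * B.coeff b| *
        ∫ ω, |pairAverage r Z a b n ω - ∫ ω', pairAverage r Z a b n ω'|) atTop (nhds 0) := by
    rw [← Finset.sum_const_zero (s := Finset.range (A.natDegree + 1))]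
    refine tendsto_finsetSum _ fun a _ => ?_
    rw [← Finset.sum_const_zero (s := Finset.range (B.natDegree + 1))]
    refine tendsto_finsetSum _ fun b _ => ?_
    by_cases h : A.coeff a = 0 ∨ B.coeff b = 0
    · have : A.coeff a * B.coeff b = 0 := mul_eq_zero.2 h
      simp [this]
    · push Not at h
      simpa using (hZ.tendsto_integral_abs_pairAverage_sub h0 hs
        (hAB a b h.1 h.2)).const_mul |A.coeff a * B.coeff b|
  refine squeeze_zero (fun n => integral_nonneg fun ω => abs_nonneg _) (fun n => ?_) hlim
  have hE : ∫ ω, polyAverage r Z A B n ω = ∑ a ∈ Finset.range (A.natDegree + 1),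
      ∑ b ∈ Finset.range (B.natDegree + 1),
        A.coeff a * B.coeff b * ∫ ω, pairAverage r Z a b n ω := by
    simp only [polyAverage_eq_sum]
    rw [integral_finsetSum _ fun a _ => integrable_finsetSum _ fun b _ => (hi a b n).const_mul _]
    refine Finset.sum_congr rfl fun a _ => ?_
    rw [integral_finsetSum _ fun b _ => (hi a b n).const_mul _]
    exact Finset.sum_congr rfl fun b _ => integral_const_mul _ _
  have hR : ∑ a ∈ Finset.range (A.natDegree + 1),
      ∑ b ∈ Finset.range (B.natDegree + 1), |A.coeff a * B.coeff b| *
        ∫ ω, |pairAverage r Z a b n ω - ∫ ω', pairAverage r Z a b n ω'| =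
      ∫ ω, ∑ a ∈ Finset.range (A.natDegree + 1),
      ∑ b ∈ Finset.range (B.natDegree + 1), |A.coeff a * B.coeff b| *
        |pairAverage r Z a b n ω - ∫ ω', pairAverage r Z a b n ω'| := by
    rw [integral_finsetSum _ fun a _ => integrable_finsetSum _ fun b _ => hI a b n]
    refine Finset.sum_congr rfl fun a _ => ?_
    rw [integral_finsetSum _ fun b _ => hI a b n]
    exact Finset.sum_congr rfl fun b _ => (integral_const_mul _ _).symm
  rw [hR]
  refine integral_mono (((hZ.hasMoments_polyAverage A B n).integrable.sub
    (integrable_const _)).abs) (integrable_finsetSum _ fun a _ =>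
      integrable_finsetSum _ fun b _ => hI a b n) fun ω => ?_
  simp only [hE]
  rw [polyAverage_eq_sum]
  simp only [← Finset.sum_sub_distrib, ← mul_sub, ← abs_mul]
  exact (Finset.abs_sum_le_sum_abs _ _).trans
    (Finset.sum_le_sum fun a _ => Finset.abs_sum_le_sum_abs _ _)

end IsCSG

/-- The nonconstant part `∑ d (2k) He_{2k}` of an even Hermite expansion. -/
def evenPart (d : ℕ → ℝ) (q : ℕ) : Polynomial ℝ :=
  ∑ k ∈ Finset.Icc 1 (q / 2), d (2 * k) • hermiteR (2 * k)

/-- The polynomial `∑ d (2k) He_{2k-1}`. -/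
def oddShift (d : ℕ → ℝ) (q : ℕ) : Polynomial ℝ :=
  ∑ k ∈ Finset.Icc 1 (q / 2), d (2 * k) • hermiteR (2 * k - 1)

theorem evenPart_eq (d : ℕ → ℝ) (q : ℕ) :
    evenPart d q = Polynomial.X * oddShift d q - Polynomial.derivative (oddShift d q) := by
  simp only [evenPart, oddShift, Finset.mul_sum, map_sum, ← Finset.sum_sub_distrib]
  refine Finset.sum_congr rfl fun k hk => ?_
  have hk1 : 2 * k = (2 * k - 1) + 1 := by have := (Finset.mem_Icc.1 hk).1; omega
  rw [mul_smul_comm, Polynomial.derivative_smul, ← smul_sub, ← hermiteR_succ, ← hk1]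

theorem derivative_evenPart (d : ℕ → ℝ) (q : ℕ) :
    Polynomial.derivative (evenPart d q) =
      ∑ k ∈ Finset.Icc 1 (q / 2), (d (2 * k) * (2 * k : ℕ)) • hermiteR (2 * k - 1) := by
  simp only [evenPart, map_sum, Polynomial.derivative_smul, derivative_hermiteR, smul_smul]

theorem odd_of_coeff_sum_hermiteR_ne_zero {c : ℕ → ℝ} {q a : ℕ}
    (h : (∑ k ∈ Finset.Icc 1 q, c k • hermiteR (2 * k - 1)).coeff a ≠ 0) : Odd a := by
  by_contra ha
  refine h ?_
  rw [Polynomial.finsetSum_coeff]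
  refine Finset.sum_eq_zero fun k hk => ?_
  have hk1 := (Finset.mem_Icc.1 hk).1
  rw [Polynomial.coeff_smul, coeff_hermiteR_of_odd_add, smul_zero]
  grind

namespace IsCSG

variable {Z : ℤ → Ω → ℝ} {r : ℤ → ℝ} [IsProbabilityMeasure (ℙ : Measure Ω)]

theorem integral_oddShift_mul_derivative_evenPart (hZ : IsCSG Z r) (h0 : r 0 = 1) (d : ℕ → ℝ)
    (q : ℕ) (i j : ℤ) :
    ∫ ω, (oddShift d q).eval (Z i ω) * (Polynomial.derivative (evenPart d q)).eval (Z j ω) =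
      ∑ k ∈ Finset.Icc 1 (q / 2), d (2 * k) ^ 2 * (2 * k).factorial * r (j - i) ^ (2 * k - 1) := by
  rw [derivative_evenPart]
  simp only [oddShift, Polynomial.eval_finsetSum, Polynomial.eval_smul, smul_eq_mul,
    Finset.sum_mul_sum]
  have hi : ∀ (k l : ℕ), Integrable (fun ω => d (2 * k) * (hermiteR (2 * k - 1)).eval (Z i ω) *
      (d (2 * l) * (2 * l : ℕ) * (hermiteR (2 * l - 1)).eval (Z j ω))) (ℙ : Measure Ω) :=
    fun k l => ((((hZ.hasMoments i).polynomial_eval _).const_mul _).mul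
      (((hZ.hasMoments j).polynomial_eval _).const_mul _)).integrable
  rw [integral_finsetSum _ fun k _ => integrable_finsetSum _ fun l _ => hi k l]
  refine Finset.sum_congr rfl fun k hk => ?_
  rw [integral_finsetSum _ fun l _ => hi k l]
  have hk1 := (Finset.mem_Icc.1 hk).1
  have e : ∀ l ∈ Finset.Icc 1 (q / 2), ∫ ω, d (2 * k) * (hermiteR (2 * k - 1)).eval (Z i ω) *
      (d (2 * l) * (2 * l : ℕ) * (hermiteR (2 * l - 1)).eval (Z j ω)) =
      if l = k then d (2 * k) ^ 2 * (2 * k).factorial * r (j - i) ^ (2 * k - 1) else 0 := by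
    intro l hl
    have hl1 := (Finset.mem_Icc.1 hl).1
    simp only [mul_mul_mul_comm _ _ _ ((hermiteR (2 * l - 1)).eval _), integral_const_mul,
      hZ.integral_hermiteR_mul_hermiteR h0]
    split_ifs with h1 h2 h2
    · subst h2
      rw [← Nat.mul_factorial_pred (by omega : 2 * l ≠ 0)]
      push_cast
      ring
    · omega
    · omega
    · simp
  rw [Finset.sum_congr rfl e]
  simp [Finset.mem_Icc.1 hk]

theorem summable_cov_pow (hZ : IsCSG Z r) (h0 : r 0 = 1) (hs : Summable fun m => r m ^ 2)
    {k : ℕ} (hk : 1 ≤ k) : Summable fun m => r m ^ (2 * k) := by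
  refine hs.of_nonneg_of_le (fun m => (even_two_mul k).pow_nonneg _) fun m => ?_
  rw [pow_mul]
  refine pow_le_of_le_one (sq_nonneg _) ?_ (by omega)
  rw [← sq_abs]
  exact pow_le_one₀ (abs_nonneg _) (hZ.abs_cov_le_one h0 m)

theorem tendsto_integral_polyAverage (hZ : IsCSG Z r) (h0 : r 0 = 1)
    (hs : Summable fun m => r m ^ 2) (d : ℕ → ℝ) (q : ℕ) :
    Tendsto (fun n => ∫ ω, polyAverage r Z (oddShift d q)
      (Polynomial.derivative (evenPart d q)) n ω) atTop (nhds (ufq r d q)) := by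
  have hsum : ∀ k ∈ Finset.Icc 1 (q / 2), Summable fun m : ℤ =>
      d (2 * k) ^ 2 * (2 * k).factorial * r m ^ (2 * k) := fun k hk =>
    (hZ.summable_cov_pow h0 hs (Finset.mem_Icc.1 hk).1).mul_left _
  have hu : ufq r d q = ∑' m, ∑ k ∈ Finset.Icc 1 (q / 2),
      d (2 * k) ^ 2 * (2 * k).factorial * r m ^ (2 * k) := by
    rw [Summable.tsum_finsetSum hsum]
    simp only [ufq, h0, div_one, tsum_mul_left]
  rw [hu]
  refine (tendsto_average_sum_sub (summable_sum hsum)).congr fun n => ?_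
  have hm := fun i j : ℕ => (hZ.hasMoments_eval_mul_eval (oddShift d q)
    (Polynomial.derivative (evenPart d q)) i j).const_mul (r (j - i))
  simp only [polyAverage]
  rw [integral_const_mul, integral_finsetSum _ fun i _ => integrable_finsetSum _ fun j _ =>
    (hm i j).integrable]
  congr 1
  refine Finset.sum_congr rfl fun i _ => ?_
  rw [integral_finsetSum _ fun j _ => (hm i j).integrable]
  refine Finset.sum_congr rfl fun j _ => ?_
  rw [integral_const_mul, hZ.integral_oddShift_mul_derivative_evenPart h0, Finset.mul_sum]
  refine Finset.sum_congr rfl fun k hk => ?_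
  have hk1 := (Finset.mem_Icc.1 hk).1
  rw [mul_left_comm, mul_pow_sub_one (by omega)]

theorem tendsto_integral_abs_polyAverage_sub_ufq (hZ : IsCSG Z r) (h0 : r 0 = 1)
    (hs : Summable fun m => r m ^ 2) (d : ℕ → ℝ) (q : ℕ) :
    Tendsto (fun n => ∫ ω, |polyAverage r Z (oddShift d q)
      (Polynomial.derivative (evenPart d q)) n ω - ufq r d q|) atTop (nhds 0) := by
  set A := oddShift d q
  set B := Polynomial.derivative (evenPart d q) with hB
  have h1 := hZ.tendsto_integral_abs_polyAverage_sub h0 hs (A := A) (B := B) fun a b ha hb => by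
    rw [hB, derivative_evenPart] at hb
    exact (odd_of_coeff_sum_hermiteR_ne_zero ha).add_odd (odd_of_coeff_sum_hermiteR_ne_zero hb)
  have h2 := ((hZ.tendsto_integral_polyAverage h0 hs d q).sub_const (ufq r d q)).abs
  rw [sub_self, abs_zero] at h2
  have h3 := h1.add h2
  rw [add_zero] at h3
  refine squeeze_zero (fun n => integral_nonneg fun ω => abs_nonneg _) (fun n => ?_) h3
  have hi := (hZ.hasMoments_polyAverage A B n).integrable
  have hi' := (hi.sub (integrable_const (∫ ω, polyAverage r Z A B n ω))).abs
  refine (integral_mono (hi.sub (integrable_const (ufq r d q))).abs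
    (hi'.add (integrable_const |(∫ ω, polyAverage r Z A B n ω) - ufq r d q|)) fun ω =>
    abs_sub_le _ _ _).trans_eq ?_
  refine (integral_add hi' (integrable_const _)).trans ?_
  simp [A, B]

theorem ufq_pos (hZ : IsCSG Z r) (h0 : r 0 = 1) (hs : Summable fun m => r m ^ 2) {d : ℕ → ℝ}
    {q : ℕ} (hq : 0 < q) (hqe : q % 2 = 0) (hd : d q ≠ 0) : 0 < ufq r d q := by
  have hnn : ∀ k (m : ℤ), 0 ≤ (r m / r 0) ^ (2 * k) := fun k m => (even_two_mul k).pow_nonneg _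
  refine Finset.sum_pos' (fun k _ => mul_nonneg (by positivity) (tsum_nonneg (hnn k)))
    ⟨q / 2, Finset.mem_Icc.2 ⟨by omega, le_rfl⟩, ?_⟩
  have e : 2 * (q / 2) = q := by omega
  have hd2 : 0 < d (2 * (q / 2)) ^ 2 := by rw [e]; positivity
  refine mul_pos (mul_pos hd2 (by positivity)) ?_
  have hsum : Summable fun m => (r m / r 0) ^ (2 * (q / 2)) := by
    simpa [h0] using hZ.summable_cov_pow h0 hs (by omega : 1 ≤ q / 2)
  exact hsum.tsum_pos (hnn _) 0 (by simp [h0])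

end IsCSG

/-- The normalized sum `n^{-1/2} ∑ P (y i)`. -/
def normSum (P : Polynomial ℝ) (n : ℕ) (y : ℤ → ℝ) : ℝ :=
  1 / √n * ∑ i ∈ Finset.range n, P.eval (y i)

theorem measurable_normSum (P : Polynomial ℝ) (n : ℕ) : Measurable (normSum P n) :=
  (Finset.measurable_fun_sum _ fun (i : ℕ) _ =>
    P.continuous.measurable.comp (measurable_pi_apply (i : ℤ))).const_mul _

namespace IsCSG

variable {Z : ℤ → Ω → ℝ} {r : ℤ → ℝ}

theorem measurable_seq (hZ : IsCSG Z r) : Measurable fun ω => fun k => Z k ω :=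
  measurable_pi_lambda _ hZ.1

variable [IsProbabilityMeasure (ℙ : Measure Ω)]

theorem integral_eval_mul_comp_normSum (hZ : IsCSG Z r) (h0 : r 0 = 1) (d : ℕ → ℝ) (q n : ℕ)
    {φ φ' : ℝ → ℝ} (hφ : ∀ x, HasDerivAt φ (φ' x) x) (hc : Continuous φ') {C C' : ℝ}
    (hb : ∀ x, |φ x| ≤ C) (hb' : ∀ x, |φ' x| ≤ C') (i : ℤ) :
    ∫ ω, (evenPart d q).eval (Z i ω) * φ (normSum (evenPart d q) n (Z · ω)) =
      ∫ ω, (1 / √n * ∑ j ∈ Finset.range n, r (j - i) * ((oddShift d q).eval (Z i ω) *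
        (Polynomial.derivative (evenPart d q)).eval (Z j ω))) *
          φ' (normSum (evenPart d q) n (Z · ω)) := by
  set P := evenPart d q with hP
  set H := oddShift d q
  have hφm : Measurable φ :=
    (continuous_iff_continuousAt.2 fun x => (hφ x).continuousAt).measurable
  have hUm := (measurable_normSum P n).comp hZ.measurable_seq
  have hφU : HasMoments fun ω => φ (normSum P n (Z · ω)) :=
    .of_bounded (hφm.comp hUm) C fun ω => hb _
  have hφU' : HasMoments fun ω => φ' (normSum P n (Z · ω)) :=
    .of_bounded (hc.measurable.comp hUm) C' fun ω => hb' _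
  have he : ∀ (Q : Polynomial ℝ) (k : ℤ), HasMoments fun ω => Q.eval (Z k ω) := fun Q k =>
    (hZ.hasMoments k).polynomial_eval Q
  have hem : ∀ (Q : Polynomial ℝ) (k : ℤ), Measurable fun y : ℤ → ℝ => Q.eval (y k) := fun Q k =>
    Q.continuous.measurable.comp (measurable_pi_apply k)
  have hT : HasMoments fun ω => (1 / √n * ∑ j ∈ Finset.range n, r (j - i) * (H.eval (Z i ω) *
      (Polynomial.derivative P).eval (Z j ω))) * φ' (normSum P n (Z · ω)) :=
    (HasMoments.const_mul _ (.sum _ fun (j : ℕ) _ =>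
      .const_mul _ (hZ.hasMoments_eval_mul_eval H (Polynomial.derivative P) i j))).mul hφU'
  have hD := (he (Polynomial.derivative H) i).mul hφU
  have key := hZ.integral_mul_eq h0 i
    (Φ := fun y => H.eval (y i) * φ (normSum P n y))
    (Φ' := fun y => (Polynomial.derivative H).eval (y i) * φ (normSum P n y) +
      (1 / √n * ∑ j ∈ Finset.range n, r (j - i) * (H.eval (y i) *
        (Polynomial.derivative P).eval (y j))) * φ' (normSum P n y))
    ((hem H i).mul (hφm.comp (measurable_normSum P n)))
    (((hem _ i).mul (hφm.comp (measurable_normSum P n))).add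
      (((Finset.measurable_sum _ fun (j : ℕ) _ => ((hem H i).mul (hem _ _)).const_mul _).const_mul _).mul
        (hc.measurable.comp (measurable_normSum P n))))
    (fun w t => ?_) ((he H i).mul hφU).integrable
    ((hZ.hasMoments i).mul ((he H i).mul hφU)).integrable (hD.add hT).integrable
  · have e : ∫ ω, P.eval (Z i ω) * φ (normSum P n (Z · ω)) =
        ∫ ω, (Z i ω * (H.eval (Z i ω) * φ (normSum P n (Z · ω))) -
          (Polynomial.derivative H).eval (Z i ω) * φ (normSum P n (Z · ω))) := by
      refine integral_congr_ae (Eventually.of_forall fun ω => ?_)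
      simp only [hP, evenPart_eq, Polynomial.eval_sub, Polynomial.eval_mul, Polynomial.eval_X]
      ring
    rw [e, integral_sub ((hZ.hasMoments i).mul ((he H i).mul hφU)).integrable hD.integrable, key,
      integral_add hD.integrable hT.integrable, add_sub_cancel_left]
  · have hl : ∀ m : ℤ, HasDerivAt (fun t : ℝ => w m + r (m - i) * t) (r (m - i)) t := fun m => by
      simpa using ((hasDerivAt_id' t).const_mul (r (m - i))).const_add (w m)
    have hU : HasDerivAt (fun t : ℝ => normSum P n fun j => w j + r (j - i) * t)
        (1 / √n * ∑ j ∈ Finset.range n,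
          (Polynomial.derivative P).eval (w j + r (j - i) * t) * r (j - i)) t :=
      (HasDerivAt.fun_sum fun (j : ℕ) _ => (P.hasDerivAt _).comp t (hl j)).const_mul _
    refine (((H.hasDerivAt _).comp t (hl i)).mul ((hφ _).comp t hU)).congr_deriv ?_
    simp only [sub_self, h0, Function.comp_apply, Finset.mul_sum, Finset.sum_mul, mul_one]
    congr 1
    exact Finset.sum_congr rfl fun j _ => by ring

theorem integral_normSum_mul (hZ : IsCSG Z r) (h0 : r 0 = 1) (d : ℕ → ℝ) (q n : ℕ)
    {φ φ' : ℝ → ℝ} (hφ : ∀ x, HasDerivAt φ (φ' x) x) (hc : Continuous φ') {C C' : ℝ}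
    (hb : ∀ x, |φ x| ≤ C) (hb' : ∀ x, |φ' x| ≤ C') :
    ∫ ω, normSum (evenPart d q) n (Z · ω) * φ (normSum (evenPart d q) n (Z · ω)) =
      ∫ ω, polyAverage r Z (oddShift d q) (Polynomial.derivative (evenPart d q)) n ω *
          φ' (normSum (evenPart d q) n (Z · ω)) := by
  have hφm : Measurable φ :=
    (continuous_iff_continuousAt.2 fun x => (hφ x).continuousAt).measurable
  have hUm := (measurable_normSum (evenPart d q) n).comp hZ.measurable_seq
  have hφU : HasMoments fun ω => φ (normSum (evenPart d q) n (Z · ω)) :=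
    .of_bounded (hφm.comp hUm) C fun ω => hb _
  have hφU' : HasMoments fun ω => φ' (normSum (evenPart d q) n (Z · ω)) :=
    .of_bounded (hc.measurable.comp hUm) C' fun ω => hb' _
  have hL : ∀ i : ℕ, Integrable (fun ω => 1 / √n * ((evenPart d q).eval (Z i ω) *
      φ (normSum (evenPart d q) n (Z · ω)))) (ℙ : Measure Ω) := fun i =>
    ((((hZ.hasMoments i).polynomial_eval _).mul hφU).const_mul _).integrable
  have hR : ∀ i : ℕ, Integrable (fun ω => 1 / √n * ((1 / √n * ∑ j ∈ Finset.range n,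
      r (j - i) * ((oddShift d q).eval (Z i ω) *
        (Polynomial.derivative (evenPart d q)).eval (Z j ω))) *
          φ' (normSum (evenPart d q) n (Z · ω)))) (ℙ : Measure Ω) := fun i =>
    ((HasMoments.mul (.const_mul _ (.sum _ fun (j : ℕ) _ => .const_mul _
      (hZ.hasMoments_eval_mul_eval _ _ i j))) hφU').const_mul _).integrable
  have e1 : ∀ ω, normSum (evenPart d q) n (Z · ω) * φ (normSum (evenPart d q) n (Z · ω)) =
      ∑ i ∈ Finset.range n, 1 / √n * ((evenPart d q).eval (Z i ω) *
        φ (normSum (evenPart d q) n (Z · ω))) := fun ω => by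
    generalize hx : φ (normSum (evenPart d q) n (Z · ω)) = x
    rw [normSum, Finset.mul_sum, Finset.sum_mul]
    exact Finset.sum_congr rfl fun i _ => by ring
  have e2 : ∀ ω, polyAverage r Z (oddShift d q) (Polynomial.derivative (evenPart d q)) n ω *
      φ' (normSum (evenPart d q) n (Z · ω)) =
      ∑ i ∈ Finset.range n, 1 / √n * ((1 / √n * ∑ j ∈ Finset.range n,
      r (j - i) * ((oddShift d q).eval (Z i ω) *
        (Polynomial.derivative (evenPart d q)).eval (Z j ω))) *
          φ' (normSum (evenPart d q) n (Z · ω))) := fun ω => by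
    have hs : (1 : ℝ) / n = 1 / √n * (1 / √n) := by
      rw [div_mul_div_comm, one_mul, Real.mul_self_sqrt n.cast_nonneg]
    rw [polyAverage, hs, mul_assoc, mul_assoc, Finset.sum_mul, Finset.mul_sum, Finset.mul_sum]
    exact Finset.sum_congr rfl fun i _ => by ring
  simp only [e1, e2]
  rw [integral_finsetSum _ fun i _ => hL i, integral_finsetSum _ fun i _ => hR i]
  refine Finset.sum_congr rfl fun i _ => ?_
  rw [integral_const_mul, integral_const_mul,
    hZ.integral_eval_mul_comp_normSum h0 d q n hφ hc hb hb' i]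

theorem dTV_normSum_le (hZ : IsCSG Z r) (h0 : r 0 = 1) {d : ℕ → ℝ} {q : ℕ}
    (hu : 0 < ufq r d q) (n : ℕ) :
    dTV (Measure.map (fun ω => normSum (evenPart d q) n (Z · ω)) (ℙ : Measure Ω))
      (gaussianReal 0 (ufq r d q).toNNReal) ≤
    2 / ufq r d q * ∫ ω, |polyAverage r Z (oddShift d q)
      (Polynomial.derivative (evenPart d q)) n ω - ufq r d q| := by
  set u := ufq r d q
  set T := polyAverage r Z (oddShift d q) (Polynomial.derivative (evenPart d q)) n
  set U : Ω → ℝ := fun ω => normSum (evenPart d q) n (Z · ω)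
  have hUm : Measurable U := (measurable_normSum (evenPart d q) n).comp hZ.measurable_seq
  have hv : u.toNNReal ≠ 0 := (Real.toNNReal_pos.2 hu).ne'
  have hvu : (u.toNNReal : ℝ) = u := Real.coe_toNNReal _ hu.le
  have := Measure.isProbabilityMeasure_map (μ := (ℙ : Measure Ω)) hUm.aemeasurable
  refine dTV_le_of_forall_continuous fun f hf hf0 hf1 => ?_
  obtain ⟨φ, φ', hφ, hc, heq, hb', C, hb⟩ := exists_stein_solution hv hf hf0 hf1
  rw [hvu] at heq hb'
  have hb2 : ∀ x, |φ' x| ≤ 2 / u := fun x => by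
    have := hb' x
    rw [abs_mul, abs_of_pos hu] at this
    rwa [le_div_iff₀' hu]
  have hφm : Measurable φ :=
    (continuous_iff_continuousAt.2 fun x => (hφ x).continuousAt).measurable
  have hφU : HasMoments fun ω => φ (U ω) := .of_bounded (hφm.comp hUm) C fun ω => hb _
  have hφU' : HasMoments fun ω => φ' (U ω) :=
    .of_bounded (hc.measurable.comp hUm) _ fun ω => hb2 _
  have hU : HasMoments U :=
    .const_mul _ (.sum _ fun i _ => (hZ.hasMoments i).polynomial_eval _)
  have hT : HasMoments T := hZ.hasMoments_polyAverage _ _ n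
  have hfU : HasMoments fun ω => f (U ω) := .of_bounded (hf.measurable.comp hUm) 1 fun ω =>
    abs_le.2 ⟨by linarith [hf0 (U ω)], hf1 _⟩
  have key := hZ.integral_normSum_mul h0 d q n hφ hc hb hb2
  have e : (∫ x, f x ∂Measure.map U ℙ) - ∫ x, f x ∂gaussianReal 0 u.toNNReal =
      -∫ ω, (T ω - u) * φ' (U ω) := by
    rw [integral_map hUm.aemeasurable hf.aestronglyMeasurable]
    have e1 : ∫ ω, (T ω - u) * φ' (U ω) = (∫ ω, T ω * φ' (U ω)) - ∫ ω, u * φ' (U ω) := by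
      rw [← integral_sub (hT.mul hφU').integrable (hφU'.const_mul u).integrable]
      simp only [sub_mul]
    have e2 : ∫ ω, (u * φ' (U ω) - U ω * φ (U ω)) =
        (∫ ω, f (U ω)) - ∫ x, f x ∂gaussianReal 0 u.toNNReal := by
      simp only [heq]
      rw [integral_sub hfU.integrable (integrable_const _)]
      simp
    rw [integral_sub (hφU'.const_mul u).integrable (hU.mul hφU).integrable] at e2
    rw [e1, ← e2]
    change ∫ ω, U ω * φ (U ω) = ∫ ω, T ω * φ' (U ω) at key
    rw [key]
    ring
  rw [e, abs_neg, ← integral_const_mul, ← Real.norm_eq_abs]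
  refine norm_integral_le_of_norm_le
    (((hT.integrable.sub (integrable_const u)).abs).const_mul _) (Eventually.of_forall fun ω => ?_)
  rw [Real.norm_eq_abs, abs_mul, mul_comm]
  exact mul_le_mul_of_nonneg_right (hb2 _) (abs_nonneg _)

end IsCSG

theorem fpoly_eq (r0 : ℝ) (d : ℕ → ℝ) (q : ℕ) (x : ℝ) :
    fpoly r0 d q x = d 0 + (evenPart d q).eval (x / √r0) := by
  have e : Finset.Icc 1 (q / 2) = Finset.Ico 1 (q / 2 + 1) := by ext; simp
  rw [fpoly, evenPart, Finset.range_eq_Ico, Finset.sum_eq_sum_Ico_succ_bot (by omega), e]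
  simp [hermiteFun_eq_eval, hermiteR_zero, Polynomial.eval_finsetSum]

namespace IsCSG

variable {Z : ℤ → Ω → ℝ} {r : ℤ → ℝ}

theorem normalize (hZ : IsCSG Z r) :
    IsCSG (fun k ω => Z k ω / √(r 0)) fun k => r k / r 0 := by
  refine ⟨fun k => (hZ.1 k).div_const _, fun s a => ?_, fun j k => ?_, div_pos hZ.2.2.2 hZ.2.2.2⟩
  · obtain ⟨v, hv⟩ := hZ.2.1 s fun k => a k / √(r 0)
    refine ⟨v, ?_⟩
    rw [← hv]
    congr 1
    ext ω
    exact Finset.sum_congr rfl fun k _ => by ring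
  · simp only [div_mul_div_comm, Real.mul_self_sqrt hZ.2.2.2.le, integral_div, hZ.2.2.1]

theorem ufq_normalize (hZ : IsCSG Z r) (d : ℕ → ℝ) (q : ℕ) :
    ufq (fun k => r k / r 0) d q = ufq r d q := by
  simp [ufq, div_self hZ.2.2.2.ne']

variable [IsProbabilityMeasure (ℙ : Measure Ω)]

theorem lamE_fpoly (hZ : IsCSG Z r) (d : ℕ → ℝ) (q : ℕ) : lamE (fpoly (r 0) d q) Z = d 0 := by
  have hY := hZ.normalize
  have h0 : (fun k => r k / r 0) 0 = 1 := div_self hZ.2.2.2.ne'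
  have hm : ∀ P : Polynomial ℝ, Integrable (fun ω => P.eval (Z 0 ω / √(r 0))) (ℙ : Measure Ω) :=
    fun P => ((hY.hasMoments 0).polynomial_eval P).integrable
  simp only [lamE, fpoly_eq]
  rw [integral_add (integrable_const _) (hm _)]
  simp only [evenPart, Polynomial.eval_finsetSum, Polynomial.eval_smul, smul_eq_mul]
  rw [integral_finsetSum _ fun k _ => (hm _).const_mul _]
  simp only [integral_const_mul]
  rw [Finset.sum_eq_zero fun k hk => ?_]
  · simp
  · have hk1 := (Finset.mem_Icc.1 hk).1
    have := hY.integral_hermiteR h0 (2 * k) 0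
    rw [if_neg (by omega)] at this
    rw [this, mul_zero]

theorem Ustat_fpoly (hZ : IsCSG Z r) (d : ℕ → ℝ) (q n : ℕ) :
    Ustat (fpoly (r 0) d q) Z n = fun ω => normSum (evenPart d q) n fun k => Z k ω / √(r 0) := by
  ext ω
  rcases Nat.eq_zero_or_pos n with rfl | hn
  · simp [Ustat, normSum]
  have hn' : (0 : ℝ) < n := by exact_mod_cast hn
  have hs := Real.mul_self_sqrt hn'.le
  have hs0 : √(n : ℝ) ≠ 0 := (Real.sqrt_pos.2 hn').ne'
  rw [Ustat, hZ.lamE_fpoly, Qvar, normSum]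
  simp only [fpoly_eq, Finset.sum_add_distrib, Finset.sum_const, Finset.card_range, nsmul_eq_mul]
  field_simp
  rw [Real.sq_sqrt hn'.le]
  ring

end IsCSG

/-- asymptotic normality in total variation under square
summability and asymptotic constant sign/monotonicity of `r`. -/
theorem statement_6
    {Ω : Type*} [MeasureSpace Ω] [IsProbabilityMeasure (ℙ : Measure Ω)]
    (Z : ℤ → Ω → ℝ) (r : ℤ → ℝ) (hZ : IsCSG Z r)
    (q : ℕ) (hq : 0 < q) (hqe : q % 2 = 0)
    (d : ℕ → ℝ) (hd : d q = r 0 ^ (q / 2))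
    (hsum : Summable fun j : ℤ => (r j) ^ 2)
    (hmono : ∃ K : ℕ,
      (∀ k : ℕ, K ≤ k → 0 ≤ r k ∧ r (k + 1) ≤ r k) ∨
      (∀ k : ℕ, K ≤ k → r k ≤ 0 ∧ r k ≤ r (k + 1))) :
    Filter.Tendsto
      (fun n : ℕ =>
        dTV (Measure.map (Ustat (fpoly (r 0) d q) Z n) (ℙ : Measure Ω))
          (gaussianReal 0 (Real.toNNReal (ufq r d q))))
      Filter.atTop (nhds 0) := by
  have hY := hZ.normalize
  have h0 : (fun k => r k / r 0) 0 = 1 := div_self hZ.2.2.2.ne'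
  have hs : Summable fun m => (fun k => r k / r 0) m ^ 2 := by
    simpa only [div_pow] using hsum.div_const (r 0 ^ 2)
  have hu := hY.ufq_pos h0 hs hq hqe (d := d) (by rw [hd]; exact (pow_pos hZ.2.2.2 _).ne')
  have hlim := (hY.tendsto_integral_abs_polyAverage_sub_ufq h0 hs d q).const_mul
    (2 / ufq (fun k => r k / r 0) d q)
  rw [mul_zero] at hlim
  refine squeeze_zero (fun n => dTV_nonneg _ _) (fun n => ?_) hlim
  rw [hZ.Ustat_fpoly, ← hZ.ufq_normalize]
  exact hY.dTV_normSum_le h0 hu n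

end
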